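/- Let d ≥ 1 and let (A_n)_{n≥1} be rotor-router aggregation in ℤ^d built from any configuration of rotor stacks with discrepancy at most 1 (in particular, from any initial configuration of cyclically repeating rotors). Then 𝓛(n^{−1/d} A_n^□ Δ B) → 0 as n → ∞, where B ⊆ ℝ^d is the closed Euclidean ball of unit volume centered at the origin. -/

import Mathlib

open scoped BigOperators Pointwise symmDiff
open MeasureTheory Filter

noncomputable section
open scoped Classical
namespace RotorRouterPaper

/-- Sites of the lattice `ℤ^d`. -/
abbrev Site (d : ℕ) := Fin d → ℤ

/-- The `i`-th standard basis vector of `ℤ^d`. -/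
def unitVec (d : ℕ) (i : Fin d) : Site d := fun j => if j = i then 1 else 0

/-- Squared Euclidean norm of a lattice point. -/
def nsq {d : ℕ} (x : Site d) : ℝ := ∑ i, ((x i : ℝ)) ^ 2

/-- Euclidean norm of a lattice point. -/
def enorm {d : ℕ} (x : Site d) : ℝ := Real.sqrt (nsq x)

/-- Adjacency `x ∼ y`: Euclidean distance one. -/
def Adj {d : ℕ} (x y : Site d) : Prop := nsq (x - y) = 1

/-- `ω_d`, the Lebesgue volume of the unit ball in `ℝ^d`. -/
def ballVol (d : ℕ) : ℝ := (volume (Metric.ball (0 : EuclideanSpace ℝ (Fin d)) 1)).toReal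

/-- The lattice ball `B_n = {y ∈ ℤ^d : ω_d ‖y‖^d < n}`. -/
def lball (d n : ℕ) : Set (Site d) := {y | ballVol d * enorm y ^ d < (n : ℝ)}

/-- Characterization of the expected exit time function of a (finite) region `A ⊆ ℤ^d`:
it vanishes off `A` and its discrete Laplacian is `-1` on `A`. -/
def IsExitFun (d : ℕ) (A : Set (Site d)) (e : Site d → ℝ) : Prop :=
  (∀ x, x ∉ A → e x = 0) ∧
  ∀ x ∈ A, (1 / (2 * (d : ℝ))) * (∑ i, (e (x + unitVec d i) + e (x - unitVec d i))) - e x = -1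

/-- The expected exit time function `x ↦ e_x(A)` (the unique function satisfying
`IsExitFun` when `A` is finite). -/
def exitFun (d : ℕ) (A : Set (Site d)) : Site d → ℝ :=
  if h : ∃ e, IsExitFun d A e then h.choose else 0

/-- `ē(A) = sup_x e_x(A)`. -/
def ebar (d : ℕ) (A : Set (Site d)) : ℝ := sSup (Set.range (exitFun d A))

/-- `φ(n) = sup {ē(A) - e_o(B_n) : A ⊆ ℤ^d, |A| = n}`. -/
def phi (d n : ℕ) : ℝ :=
  sSup {t | ∃ A : Set (Site d), A.Finite ∧ A.ncard = n ∧ t = ebar d A - exitFun d (lball d n) 0}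

/-- `Φ(n) = ∑_{j=1}^n φ(j)`. -/
def PhiSum (d n : ℕ) : ℝ := ∑ j ∈ Finset.Icc 1 n, phi d j

/-- `ψ(A) = ∑_{x ∈ A} ‖x‖²`. -/
def psi {d : ℕ} (A : Set (Site d)) : ℝ := ∑ᶠ x ∈ A, nsq x

/-- A cardinal direction in `ℤ^d`: one of `±e_1, …, ±e_d`. -/
abbrev Dir (d : ℕ) := Fin d × Bool

/-- The lattice step vector of a cardinal direction. -/
def dirVec (d : ℕ) (ε : Dir d) : Site d := if ε.2 then unitVec d ε.1 else -unitVec d ε.1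

/-- A configuration of rotor stacks `r` (with `r x i` the direction used for the
`(i+1)`-st visit to `x`) has discrepancy at most `D` if for every site, direction and `m ≥ 1`,
among the first `m` rotors of the stack each direction occurs `m/(2d)` times up to error `D`. -/
def HasDiscrepancy (d : ℕ) (D : ℝ) (r : Site d → ℕ → Dir d) : Prop :=
  ∀ (x : Site d) (ε : Dir d) (m : ℕ), 1 ≤ m →
    |(({i | i < m ∧ r x i = ε} : Set ℕ).ncard : ℝ) - (m : ℝ) / (2 * (d : ℝ))| ≤ D

/-- One step of rotor-router walk on a state (current position, visit counts so far):
the particle at `p` being visited for the `(c p + 1)`-st time moves in direction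
`r p (c p)` and the visit count at `p` increases by one. -/
def rstep {d : ℕ} (r : Site d → ℕ → Dir d) (s : Site d × (Site d → ℕ)) :
    Site d × (Site d → ℕ) :=
  (s.1 + dirVec d (r s.1 (s.2 s.1)), Function.update s.2 s.1 (s.2 s.1 + 1))

/-- The state after `t` steps of rotor-router walk started at the origin with visit counts `c`. -/
def walkState {d : ℕ} (r : Site d → ℕ → Dir d) (c : Site d → ℕ) (t : ℕ) :
    Site d × (Site d → ℕ) :=
  (rstep r)^[t] (0, c)

/-- The number of steps until the rotor-router walk started at the origin
(with carried-over visit counts `c`) first leaves the region `A`. -/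
def exitSteps {d : ℕ} (r : Site d → ℕ → Dir d) (A : Set (Site d)) (c : Site d → ℕ) : ℕ :=
  sInf {t | (walkState r c t).1 ∉ A}

/-- The state of rotor-router aggregation after `n` particles have walked and settled:
`(aggState r n).1` is the occupied region `A_{n+1}`, `(aggState r n).2.1` the accumulated
visit counts, and `(aggState r n).2.2` the total number `T_n` of steps taken so far. -/
def aggState {d : ℕ} (r : Site d → ℕ → Dir d) : ℕ → Set (Site d) × (Site d → ℕ) × ℕ
  | 0 => ({0}, fun _ => 0, 0)
  | n + 1 =>
      let s := aggState r n
      let τ := exitSteps r s.1 s.2.1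
      (insert (walkState r s.2.1 τ).1 s.1, (walkState r s.2.1 τ).2, s.2.2 + τ)

/-- The region `A_n` of rotor-router aggregation (for `n ≥ 1`). -/
def aggRegion {d : ℕ} (r : Site d → ℕ → Dir d) (n : ℕ) : Set (Site d) :=
  (aggState r (n - 1)).1

/-- `T_n`, the total number of steps taken by the first `n` particles. -/
def totalSteps {d : ℕ} (r : Site d → ℕ → Dir d) (n : ℕ) : ℕ := (aggState r n).2.2

/-- `A^□ = A + [-1/2,1/2]^d ⊆ ℝ^d`. -/
def box (d : ℕ) (A : Set (Site d)) : Set (EuclideanSpace ℝ (Fin d)) :=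
  {z | ∃ x ∈ A, ∀ i, |z i - (x i : ℝ)| ≤ 1 / 2}

/-- The closed Euclidean ball of unit volume centered at the origin of `ℝ^d`. -/
def unitVolBall (d : ℕ) : Set (EuclideanSpace ℝ (Fin d)) :=
  Metric.closedBall 0 (ballVol d ^ (-(1 : ℝ) / (d : ℝ)))

/-- `A ⊆ ℤ^d` is orthoconvex if every line parallel to a coordinate axis meets `A`
in an interval. -/
def Orthoconvex (d : ℕ) (A : Set (Site d)) : Prop :=
  ∀ x ∈ A, ∀ i : Fin d, ∀ k : ℤ, 0 < k → x + k • unitVec d i ∈ A →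
    ∀ j : ℤ, 0 < j → j < k → x + j • unitVec d i ∈ A

/-- The nonnegative orthant `Q ⊆ ℤ^d`. -/
def orthant (d : ℕ) : Set (Site d) := {x | ∀ i, 0 ≤ x i}

/-- The cube `C(o,r) = {x : ‖x‖_∞ ≤ r}`. -/
def cubeSet (d : ℕ) (r : ℕ) : Set (Site d) := {x | ∀ i, |x i| ≤ (r : ℤ)}

/-- The boundary `∂C(o,r) = {x : ‖x‖_∞ = r + 1 and x ∼ y for some y ∈ C(o,r)}`. -/
def cubeBdry (d : ℕ) (r : ℕ) : Set (Site d) :=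
  {x | (∀ i, |x i| ≤ (r : ℤ) + 1) ∧ (∃ i, |x i| = (r : ℤ) + 1) ∧ ∃ y ∈ cubeSet d r, Adj x y}

/-- Characterization of `h_r(x) = P_x(T_Q > T_{∂C(o,r)})`: it vanishes on
`Q ∩ (C(o,r) ∪ ∂C(o,r))`, equals `1` on `∂C(o,r) ∖ Q`, is discrete harmonic on
`C(o,r) ∖ Q`, and (as a normalization) vanishes off `C(o,r) ∪ ∂C(o,r)`. -/
def IsOrthHarm (d : ℕ) (r : ℕ) (h : Site d → ℝ) : Prop :=
  (∀ x, x ∉ cubeSet d r ∪ cubeBdry d r → h x = 0) ∧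
  (∀ x ∈ orthant d ∩ (cubeSet d r ∪ cubeBdry d r), h x = 0) ∧
  (∀ x ∈ cubeBdry d r \ orthant d, h x = 1) ∧
  (∀ x ∈ cubeSet d r \ orthant d,
    h x = (1 / (2 * (d : ℝ))) * ∑ i, (h (x + unitVec d i) + h (x - unitVec d i)))

/-- The function `h_r` of the previous characterization. -/
def orthHarm (d : ℕ) (r : ℕ) : Site d → ℝ :=
  if h : ∃ f, IsOrthHarm d r f then h.choose else 0

/-- `p(k,r) = sup {h_r(x) : ‖x‖_∞ ≤ k}`. -/
def pkr (d k r : ℕ) : ℝ :=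
  sSup {t | ∃ x : Site d, (∀ i, |x i| ≤ (k : ℤ)) ∧ t = orthHarm d r x}

/-- The exponent `γ_d` of Theorem 3.1. -/
def gam (d : ℕ) : ℝ :=
  if d = 1 then 1 else if d = 2 then 1 / 3
  else (2 : ℝ) ^ (-(d : ℝ)) / (2 * (d : ℝ) ^ 2 * Real.log 3)

/-!
A rotor-router walk distributes its steps out of a site almost equally among the neighbours, so
following a function `f` that is subharmonic on the occupied set `A` along all walks gives an
approximate quadrature inequality `|A| f(0) ≤ ∑_A f + D ∑_A |∇f|`. Apply it to the Green potential
`f` of the unoccupied sites `H` of an annulus in the ball of radius `R`, `|A| = ω R ^ d`: the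
gradient sum is of order `R ^ (d + 1)`, so `|A| f(0) ≤ ∑_{B_R} f + O(R ^ (d + 1))`. Conversely,
summing by parts against a smoothing near the origin of the divisible sandpile odometer `w` of the
ball, whose Laplacian is `2 d` away from the origin and strongly negative in a small ball around it,
shows that `∑_{B_R} f - |A| f(0)` is at most `-(2 d)⁻¹ ∑_H w` up to small errors; there the
oscillation of `f` near the origin, where it is harmonic, enters and is bounded by a reflection
argument. As `w` is of order `R ^ 2` on the annulus, `|H| = o(R ^ d)`.
-/
/-! ### Discrete potential theory -/

/-- The unnormalised discrete Laplacian `f ↦ ∑_{y ∼ x} (f y - f x)` on functions on `ℤ^d`, bundled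
as a linear map. -/
def lap {d : ℕ} : (Site d → ℝ) →ₗ[ℝ] (Site d → ℝ) :=
  ∑ e : Dir d, (LinearMap.funLeft ℝ ℝ (· + dirVec d e) - LinearMap.id)

lemma lap_apply {d : ℕ} (f : Site d → ℝ) (x : Site d) :
    lap f x = ∑ e, (f (x + dirVec d e) - f x) := by
  simp only [lap, LinearMap.sum_apply, Finset.sum_apply, LinearMap.sub_apply, Pi.sub_apply,
    LinearMap.funLeft_apply, LinearMap.id_apply]

lemma lap_eq_sum_sub {d : ℕ} (f : Site d → ℝ) (x : Site d) :
    lap f x = ∑ e, f (x + dirVec d e) - 2 * d * f x := by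
  simp only [lap_apply, Finset.sum_sub_distrib, Finset.sum_const, Finset.card_univ,
    Fintype.card_prod, Fintype.card_fin, Fintype.card_bool, nsmul_eq_mul]
  push_cast
  ring

/-- The `ℓ¹` norm of the discrete gradient of `f` at `x`. -/
def gradNorm {d : ℕ} (f : Site d → ℝ) (x : Site d) : ℝ := ∑ e, |f (x + dirVec d e) - f x|

lemma gradNorm_nonneg {d : ℕ} (f : Site d → ℝ) (x : Site d) : 0 ≤ gradNorm f x :=
  Finset.sum_nonneg fun _ _ => abs_nonneg _

/-- The direction opposite to `e`, as an involution of the set of directions. -/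
def oppDir (d : ℕ) : Dir d ≃ Dir d := (Equiv.refl _).prodCongr Equiv.boolNot

@[simp]
lemma dirVec_oppDir {d : ℕ} (e : Dir d) : dirVec d (oppDir d e) = -dirVec d e := by
  rcases e with ⟨i, b⟩
  cases b <;> simp [dirVec, oppDir]

theorem nonneg_of_lap_nonpos {d : ℕ} [NeZero d] {S : Finset (Site d)} {g : Site d → ℝ}
    (hlap : ∀ x ∈ S, g x < 0 → lap g x ≤ 0)
    (hbdry : ∀ x ∈ S, g x < 0 → ∀ e, x + dirVec d e ∉ S → 0 ≤ g (x + dirVec d e)) :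
    ∀ x ∈ S, 0 ≤ g x := by
  by_contra! ⟨x₀, hx₀, hneg⟩
  obtain ⟨x₁, hx₁, hmin⟩ := S.exists_min_image g ⟨x₀, hx₀⟩
  have hm : g x₁ < 0 := (hmin x₀ hx₀).trans_lt hneg
  -- Among the minimisers pick the one furthest in direction `e₁`; its neighbour is also one.
  let i : Fin d := 0
  obtain ⟨x, hx, hmax⟩ :=
    {x ∈ S | g x = g x₁}.exists_max_image (fun x => x i) ⟨x₁, by simp [hx₁]⟩
  obtain ⟨hxS, hxm⟩ := Finset.mem_filter.1 hx
  have hx_neg : g x < 0 := hxm ▸ hm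
  have hincr : ∀ e ∈ Finset.univ, 0 ≤ g (x + dirVec d e) - g x := fun e _ => by
    by_cases h : x + dirVec d e ∈ S
    · linarith [hmin _ h]
    · linarith [hbdry x hxS hx_neg e h]
  have hlap_zero : ∑ e, (g (x + dirVec d e) - g x) = 0 :=
    le_antisymm (lap_apply g x ▸ hlap x hxS hx_neg) (Finset.sum_nonneg hincr)
  have heq : g (x + dirVec d (i, true)) = g x₁ := by
    linarith [(Finset.sum_eq_zero_iff_of_nonneg hincr).1 hlap_zero (i, true) (Finset.mem_univ _)]
  have hmem : x + dirVec d (i, true) ∈ S := by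
    by_contra h
    linarith [hbdry x hxS hx_neg _ h]
  simpa [dirVec, unitVec] using hmax _ (Finset.mem_filter.2 ⟨hmem, heq⟩)

theorem exists_lap_eq {d : ℕ} [NeZero d] (S : Finset (Site d)) (ρ : Site d → ℝ) :
    ∃ f : Site d → ℝ, (∀ x ∉ S, f x = 0) ∧ ∀ x ∈ S, lap f x = ρ x := by
  let ext : (S → ℝ) →ₗ[ℝ] (Site d → ℝ) := Function.ExtendByZero.linearMap ℝ Subtype.val
  have ext_mem (v : S → ℝ) (x : S) : ext v x = v x := Subtype.val_injective.extend_apply v 0 x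
  have ext_notMem (v : S → ℝ) (x : Site d) (hx : x ∉ S) : ext v x = 0 :=
    Function.extend_apply' _ _ _ fun ⟨y, hy⟩ => hx (hy ▸ y.2)
  let T : (S → ℝ) →ₗ[ℝ] (S → ℝ) := LinearMap.funLeft ℝ ℝ Subtype.val ∘ₗ lap ∘ₗ ext
  have nonneg (v : S → ℝ) (hv : T v = 0) (x : S) : 0 ≤ v x := by
    rw [← ext_mem v]
    exact nonneg_of_lap_nonpos (fun y hy _ => (congrFun hv ⟨y, hy⟩).le)
      (fun _ _ _ e he => (ext_notMem v _ he).ge) x x.2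
  have hinj : Function.Injective T := (injective_iff_map_eq_zero T).2 fun v hv => funext fun x =>
    le_antisymm (by simpa using nonneg (-v) (by rw [map_neg, hv, neg_zero]) x) (nonneg v hv x)
  obtain ⟨v, hv⟩ := LinearMap.injective_iff_surjective.1 hinj fun x => ρ x
  exact ⟨ext v, ext_notMem v, fun x hx => congrFun hv ⟨x, hx⟩⟩

section TranslationSums

variable {G : Type*} [AddGroup G] {S : Finset G} {u v : G → ℝ}

lemma summable_mul_translate_of_eq_zero_left (hu : ∀ x ∉ S, u x = 0) (a : G) :
    Summable fun x => u x * v (x + a) :=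
  summable_of_ne_finset_zero (s := S) fun x hx => by simp [hu x hx]

lemma summable_mul_translate_of_eq_zero_right (hv : ∀ x ∉ S, v x = 0) (a : G) :
    Summable fun x => u x * v (x + a) :=
  (Equiv.subRight a).summable_iff.1 <| by
    simpa [Function.comp_def] using summable_of_ne_finset_zero (s := S)
      (f := fun x => u (x - a) * v x) fun x hx => by simp [hv x hx]

lemma tsum_mul_translate (u v : G → ℝ) (a : G) :
    ∑' x, u x * v (x + a) = ∑' x, v x * u (x + -a) := by
  rw [← (Equiv.addRight a).tsum_eq fun x => v x * u (x + -a)]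
  simp [mul_comm]

lemma tsum_translate_sub_sq (hu : ∀ x ∉ S, u x = 0) (a : G) :
    ∑' x, (u (x + a) - u x) ^ 2 = 2 * ∑' x, u x * u x - 2 * ∑' x, u x * u (x + a) := by
  have hself : Summable fun x => u x * u x := by
    simpa using summable_mul_translate_of_eq_zero_left hu 0
  have hcross := summable_mul_translate_of_eq_zero_left (v := u) hu a
  have hshift : HasSum (fun x => u (x + a) * u (x + a)) (∑' x, u x * u x) :=
    (Equiv.addRight a).hasSum_iff.2 hself.hasSum
  rw [two_mul, ← ((hshift.add hself.hasSum).sub (hcross.hasSum.mul_left 2)).tsum_eq]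
  exact tsum_congr fun x => by ring

theorem sum_abs_translate_sub_sq_le (hu : ∀ x ∉ S, u x = 0) (A : Finset G) (a : G) :
    (∑ x ∈ A, |u (x + a) - u x|) ^ 2 ≤ 2 * S.card * ∑' x, (u (x + a) - u x) ^ 2 := by
  let T : Finset G := S ∪ S.image (· - a)
  have hT : ∀ x ∉ T, u (x + a) - u x = 0 := fun x hx => by
    simp only [T, Finset.mem_union, Finset.mem_image, not_or, not_exists, not_and] at hx
    rw [hu x hx.1, hu (x + a) fun h => hx.2 _ h (by simp), sub_zero]
  have hcard : (T.card : ℝ) ≤ 2 * S.card := by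
    have := (Finset.card_union_le S (S.image (· - a))).trans
      (Nat.add_le_add_left Finset.card_image_le _)
    exact_mod_cast this.trans (two_mul _).ge
  calc (∑ x ∈ A, |u (x + a) - u x|) ^ 2
      ≤ (∑ x ∈ T, |u (x + a) - u x|) ^ 2 := by
        gcongr ?_ ^ 2
        refine (Finset.sum_le_sum_of_subset_of_nonneg Finset.subset_union_right
          fun _ _ _ => abs_nonneg _).trans_eq (Finset.sum_subset
            (Finset.subset_union_left (s₁ := T) (s₂ := A)) fun x _ hx => ?_).symm
        rw [hT x hx, abs_zero]
    _ ≤ T.card * ∑ x ∈ T, |u (x + a) - u x| ^ 2 := sq_sum_le_card_mul_sum_sq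
    _ ≤ 2 * S.card * ∑ x ∈ T, |u (x + a) - u x| ^ 2 := by gcongr
    _ = 2 * S.card * ∑' x, (u (x + a) - u x) ^ 2 := by
        simp only [sq_abs]
        rw [tsum_eq_sum fun x hx => by rw [hT x hx]; norm_num]

end TranslationSums

section Green

variable {d : ℕ} {S : Finset (Site d)} {f : Site d → ℝ}

lemma hasSum_mul_lap {u v : Site d → ℝ} (hs : ∀ a, Summable fun x => u x * v (x + a)) :
    HasSum (fun x => u x * lap v x)
      (∑ e, ∑' x, u x * v (x + dirVec d e) - 2 * d * ∑' x, u x * v x) := by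
  have hself : HasSum (fun x => u x * v x) (∑' x, u x * v x) := by simpa using (hs 0).hasSum
  have hlap (x : Site d) :
      u x * lap v x = ∑ e, u x * v (x + dirVec d e) - 2 * d * (u x * v x) := by
    rw [lap_eq_sum_sub, mul_sub, Finset.mul_sum]
    ring
  simp only [hlap]
  exact (hasSum_sum fun e _ => (hs (dirVec d e)).hasSum).sub (hself.mul_left _)

theorem tsum_mul_lap_comm (hf : ∀ x ∉ S, f x = 0) (w : Site d → ℝ) :
    ∑' x, f x * lap w x = ∑' x, w x * lap f x := by
  rw [(hasSum_mul_lap (summable_mul_translate_of_eq_zero_left hf)).tsum_eq,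
    (hasSum_mul_lap (summable_mul_translate_of_eq_zero_right hf)).tsum_eq,
    ← (oppDir d).sum_comp fun e => ∑' x, w x * f (x + dirVec d e)]
  simp only [dirVec_oppDir, tsum_mul_translate f w, mul_comm (w _) (f _)]

theorem sum_tsum_sub_sq_eq (hf : ∀ x ∉ S, f x = 0) :
    ∑ e, ∑' x, (f (x + dirVec d e) - f x) ^ 2 = -2 * ∑' x, f x * lap f x := by
  rw [(hasSum_mul_lap (summable_mul_translate_of_eq_zero_left hf)).tsum_eq]
  simp only [tsum_translate_sub_sq hf, Finset.sum_sub_distrib, ← Finset.mul_sum, Finset.sum_const,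
    Finset.card_univ, Fintype.card_prod, Fintype.card_fin, Fintype.card_bool, nsmul_eq_mul]
  push_cast
  ring

theorem sum_gradNorm_sq_le (hf : ∀ x ∉ S, f x = 0) (A : Finset (Site d)) :
    (∑ x ∈ A, gradNorm f x) ^ 2 ≤ 4 * d * S.card * (-2 * ∑' x, f x * lap f x) := by
  calc (∑ x ∈ A, gradNorm f x) ^ 2
      = (∑ e, ∑ x ∈ A, |f (x + dirVec d e) - f x|) ^ 2 := by
        rw [Finset.sum_comm]; rfl
    _ ≤ (Finset.univ : Finset (Dir d)).card * ∑ e, (∑ x ∈ A, |f (x + dirVec d e) - f x|) ^ 2 :=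
        sq_sum_le_card_mul_sum_sq
    _ ≤ (2 * d) * ∑ e, 2 * S.card * ∑' x, (f (x + dirVec d e) - f x) ^ 2 := by
        gcongr with e
        · simp [mul_comm]
        · exact sum_abs_translate_sub_sq_le hf A _
    _ = 4 * d * S.card * (-2 * ∑' x, f x * lap f x) := by
        rw [← Finset.mul_sum, sum_tsum_sub_sq_eq hf]
        ring

end Green
/-! ### Squared norms of lattice points -/

section NormSq

variable {d : ℕ}

lemma nsq_nonneg (x : Site d) : 0 ≤ nsq x := Finset.sum_nonneg fun _ _ => sq_nonneg _

@[simp]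
lemma nsq_zero : nsq (0 : Site d) = 0 := by simp [nsq]

lemma nsq_add_dirVec (x : Site d) (e : Dir d) :
    nsq (x + dirVec d e) = nsq x + 2 * (if e.2 then (x e.1 : ℝ) else -x e.1) + 1 := by
  obtain ⟨i, b⟩ := e
  have hsq (j : Fin d) : ((x + dirVec d (i, b)) j : ℝ) ^ 2 =
      (x j : ℝ) ^ 2 + if j = i then 2 * (if b then (x i : ℝ) else -x i) + 1 else 0 := by
    rcases eq_or_ne j i with rfl | hj <;> cases b <;> simp [dirVec, unitVec, *] <;> ring
  simp only [nsq, hsq, Finset.sum_add_distrib, Finset.sum_ite_eq', Finset.mem_univ, if_true]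
  ring

lemma lap_nsq (x : Site d) : lap nsq x = 2 * d := by
  have h (i : Fin d) : ∑ b, (nsq (x + dirVec d (i, b)) - nsq x) = 2 := by
    simp only [nsq_add_dirVec, Fintype.sum_bool, if_true, Bool.false_eq_true, if_false]
    ring
  rw [lap_apply, Fintype.sum_prod_type]
  simp only [h, Finset.sum_const, Finset.card_univ, Fintype.card_fin, nsmul_eq_mul, mul_comm]

end NormSq

/-! ### Rotor-router aggregation -/

section Rotor

variable {d : ℕ} (r : Site d → ℕ → Dir d)

/-- The total increment of `f` along the first `m` rotors at `x`. -/
def rotorWork (f : Site d → ℝ) (x : Site d) (m : ℕ) : ℝ :=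
  ∑ i ∈ Finset.range m, (f (x + dirVec d (r x i)) - f x)

@[simp]
lemma rotorWork_zero (f : Site d → ℝ) (x : Site d) : rotorWork r f x 0 = 0 := rfl

lemma rotorWork_eq_sum_ncard (f : Site d → ℝ) (x : Site d) (m : ℕ) :
    rotorWork r f x m =
      ∑ e, ({i | i < m ∧ r x i = e} : Set ℕ).ncard * (f (x + dirVec d e) - f x) := by
  have hcard (e : Dir d) :
      ({i | i < m ∧ r x i = e} : Set ℕ).ncard = {i ∈ Finset.range m | r x i = e}.card := by
    rw [← Set.ncard_coe_finset]
    congr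
    ext
    simp
  simp only [hcard, rotorWork, ← nsmul_eq_mul, ← Finset.sum_const, Finset.sum_fiberwise']

variable {r} {D : ℝ} (hr : HasDiscrepancy d D r)
include hr

lemma HasDiscrepancy.nonneg : 0 ≤ D := (abs_nonneg _).trans (hr 0 (r 0 0) 1 le_rfl)

theorem abs_rotorWork_sub_le (f : Site d → ℝ) (x : Site d) (m : ℕ) :
    |rotorWork r f x m - m / (2 * d) * lap f x| ≤ D * gradNorm f x := by
  rcases Nat.eq_zero_or_pos m with rfl | hm
  · simpa using mul_nonneg hr.nonneg (gradNorm_nonneg f x)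
  rw [rotorWork_eq_sum_ncard, lap_apply, gradNorm, Finset.mul_sum, Finset.mul_sum,
    ← Finset.sum_sub_distrib]
  refine (Finset.abs_sum_le_sum_abs _ _).trans (Finset.sum_le_sum fun e _ => ?_)
  rw [← sub_mul, abs_mul]
  exact mul_le_mul_of_nonneg_right (hr x e m hm) (abs_nonneg _)

omit hr

lemma walkState_succ (c : Site d → ℕ) (t : ℕ) :
    walkState r c (t + 1) = rstep r (walkState r c t) :=
  Function.iterate_succ_apply' ..

lemma visits_walkState_succ (c : Site d → ℕ) (t : ℕ) :
    (walkState r c (t + 1)).2 = Function.update (walkState r c t).2 (walkState r c t).1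
      ((walkState r c t).2 (walkState r c t).1 + 1) := by
  rw [walkState_succ, rstep]

lemma sum_apply_update {α β : Type*} [DecidableEq α] {A : Finset α} {p : α} (hp : p ∈ A)
    (F : α → β → ℝ) (c : α → β) (k : β) :
    ∑ x ∈ A, F x (Function.update c p k x) = ∑ x ∈ A, F x (c x) + (F p k - F p (c p)) := by
  simp only [Function.apply_update F, Finset.sum_update_of_mem hp]
  rw [← Finset.add_sum_erase A _ hp, Finset.erase_eq]
  ring

section Walk

variable {A : Finset (Site d)} {c : Site d → ℕ} {t : ℕ} (ht : ∀ s < t, (walkState r c s).1 ∈ A)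
include ht

lemma sum_apply_visits_walkState (F : Site d → ℕ → ℝ) :
    ∑ x ∈ A, F x ((walkState r c t).2 x) = ∑ x ∈ A, F x (c x) + ∑ s ∈ Finset.range t,
      (F (walkState r c s).1 ((walkState r c s).2 (walkState r c s).1 + 1) -
        F (walkState r c s).1 ((walkState r c s).2 (walkState r c s).1)) := by
  induction t with
  | zero => simp [walkState]
  | succ t ih =>
    rw [Finset.sum_range_succ, ← add_assoc, ← ih fun s hs => ht s (hs.trans t.lt_succ_self),
      visits_walkState_succ, sum_apply_update (ht t t.lt_succ_self)]

lemma sum_visits_walkState :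
    ∑ x ∈ A, ((walkState r c t).2 x : ℝ) = ∑ x ∈ A, (c x : ℝ) + t := by
  simpa using sum_apply_visits_walkState ht fun _ m => (m : ℝ)

lemma sum_rotorWork_walkState (f : Site d → ℝ) :
    ∑ x ∈ A, rotorWork r f x ((walkState r c t).2 x) =
      ∑ x ∈ A, rotorWork r f x (c x) + (f (walkState r c t).1 - f 0) := by
  have htelescope := Finset.sum_range_sub (fun s => f (walkState r c s).1) t
  rw [sum_apply_visits_walkState ht, show f 0 = f (walkState r c 0).1 from rfl, ← htelescope]
  simp only [rotorWork, Finset.sum_range_succ, add_sub_cancel_left, walkState_succ, rstep]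

lemma visits_walkState_of_notMem {x : Site d} (hx : x ∉ A) : (walkState r c t).2 x = c x := by
  induction t with
  | zero => rfl
  | succ t ih =>
    have hne : x ≠ (walkState r c t).1 := fun h => hx (h ▸ ht t t.lt_succ_self)
    rw [visits_walkState_succ, Function.update_of_ne hne]
    exact ih fun s hs => ht s (hs.trans t.lt_succ_self)

end Walk

-- `nsq` has constant Laplacian `2d`, so each step of a walk confined to `A` adds about one unit of
-- work against the bounded function `nsq`.
theorem exists_walkState_notMem (hr : HasDiscrepancy d D r) (A : Finset (Site d))
    (c : Site d → ℕ) : ∃ t, (walkState r c t).1 ∉ A := by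
  by_contra! hA
  have hd : (d : ℝ) ≠ 0 := Nat.cast_ne_zero.2 (r 0 0).1.pos.ne'
  have bound (t : ℕ) : (t : ℝ) ≤
      ∑ x ∈ A, rotorWork r nsq x (c x) + ∑ x ∈ A, nsq x + ∑ x ∈ A, D * gradNorm nsq x := by
    have hpos : nsq (walkState r c t).1 ≤ ∑ x ∈ A, nsq x :=
      Finset.single_le_sum (fun x _ => nsq_nonneg x) (hA t)
    have hwork : ∑ x ∈ A, ((walkState r c t).2 x - D * gradNorm nsq x) ≤
        ∑ x ∈ A, rotorWork r nsq x ((walkState r c t).2 x) := by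
      refine Finset.sum_le_sum fun x _ => ?_
      have h := (abs_le.1 (abs_rotorWork_sub_le hr nsq x ((walkState r c t).2 x))).1
      rw [lap_nsq, div_mul_cancel₀ _ (mul_ne_zero two_ne_zero hd)] at h
      linarith
    rw [Finset.sum_sub_distrib, sum_visits_walkState fun s _ => hA s,
      sum_rotorWork_walkState (fun s _ => hA s), nsq_zero] at hwork
    have : 0 ≤ ∑ x ∈ A, (c x : ℝ) := by positivity
    linarith
  obtain ⟨t, ht⟩ := exists_nat_gt
    (∑ x ∈ A, rotorWork r nsq x (c x) + ∑ x ∈ A, nsq x + ∑ x ∈ A, D * gradNorm nsq x)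
  exact (bound t).not_gt ht

theorem exists_finset_eq_aggState (hr : HasDiscrepancy d D r) (k : ℕ) :
    ∃ A : Finset (Site d), (A : Set (Site d)) = (aggState r k).1 ∧ A.card = k + 1 ∧
      (∀ x ∉ A, (aggState r k).2.1 x = 0) ∧
      ∀ f : Site d → ℝ,
        ∑ x ∈ A, f x = A.card * f 0 + ∑ x ∈ A, rotorWork r f x ((aggState r k).2.1 x) := by
  induction k with
  | zero => exact ⟨{0}, by simp [aggState], by simp, by simp [aggState], by simp [aggState]⟩
  | succ k ih =>
    obtain ⟨A, hA, hcard, hvisits, hsum⟩ := ih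
    set c := (aggState r k).2.1
    let τ := exitSteps r (aggState r k).1 c
    have hexits : {t | (walkState r c t).1 ∉ (aggState r k).1}.Nonempty := by
      simpa only [← hA, Finset.mem_coe] using! exists_walkState_notMem hr A c
    have hout : (walkState r c τ).1 ∉ A := by
      rw [← Finset.mem_coe, hA]
      exact Nat.sInf_mem hexits
    have hin : ∀ s < τ, (walkState r c s).1 ∈ A := fun s hs => by
      simpa only [← hA, Finset.mem_coe, Set.mem_ofPred_eq, not_not] using Nat.notMem_of_lt_sInf hs
    have hvisits' : ∀ x ∉ A, (walkState r c τ).2 x = 0 := fun x hx =>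
      (visits_walkState_of_notMem hin hx).trans (hvisits x hx)
    have hstate : aggState r (k + 1) = (insert (walkState r c τ).1 (aggState r k).1,
      (walkState r c τ).2, (aggState r k).2.2 + τ) := rfl
    simp only [hstate]
    refine ⟨insert (walkState r c τ).1 A, by simp [hA], by simp [hout, hcard],
      fun x hx => hvisits' x fun h => hx (Finset.mem_insert_of_mem h), fun f => ?_⟩
    rw [Finset.sum_insert hout, Finset.sum_insert hout, hvisits' _ hout, rotorWork_zero,
      sum_rotorWork_walkState hin, hsum f, Finset.card_insert_of_notMem hout]
    push_cast
    ring

/-- `A` satisfies the mean value inequality at the origin for functions subharmonic on `A`, up to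
`D` times the total variation: a discrete, approximate form of the property that characterises the
Euclidean ball among quadrature domains. -/
def IsApproxQuadratureDomain (D : ℝ) (A : Finset (Site d)) : Prop :=
  ∀ f : Site d → ℝ, (∀ x ∈ A, 0 ≤ lap f x) →
    A.card * f 0 ≤ ∑ x ∈ A, f x + D * ∑ x ∈ A, gradNorm f x

theorem exists_isApproxQuadratureDomain_aggRegion (hr : HasDiscrepancy d D r) {n : ℕ}
    (hn : n ≠ 0) :
    ∃ A : Finset (Site d), (A : Set (Site d)) = aggRegion r n ∧ A.card = n ∧
      IsApproxQuadratureDomain D A := by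
  obtain ⟨A, hA, hcard, -, hsum⟩ := exists_finset_eq_aggState hr (n - 1)
  refine ⟨A, hA, by omega, fun f hf => ?_⟩
  have hwork : -∑ x ∈ A, D * gradNorm f x ≤
      ∑ x ∈ A, rotorWork r f x ((aggState r (n - 1)).2.1 x) := by
    rw [← Finset.sum_neg_distrib]
    refine Finset.sum_le_sum fun x hx => ?_
    have hlap : 0 ≤ (aggState r (n - 1)).2.1 x / (2 * d) * lap f x :=
      mul_nonneg (by positivity) (hf x hx)
    linarith [(abs_le.1 (abs_rotorWork_sub_le hr f x ((aggState r (n - 1)).2.1 x))).1]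
  rw [Finset.mul_sum]
  linarith [hsum f]

end Rotor
/-! ### Oscillation of harmonic functions, by reflection -/

lemma lap_comp_coord {d : ℕ} (φ : ℤ → ℝ) (j : Fin d) (x : Site d) :
    lap (fun x => φ (x j)) x = φ (x j + 1) + φ (x j - 1) - 2 * φ (x j) := by
  have hzero (i : Fin d) (hi : i ≠ j) (b : Bool) : (x + dirVec d (i, b)) j = x j := by
    cases b <;> simp [dirVec, unitVec, hi.symm]
  rw [lap_apply, Fintype.sum_prod_type, Finset.sum_eq_single j
    (fun i _ hi => Finset.sum_eq_zero fun b _ => by rw [hzero i hi, sub_self]) (by simp)]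
  simp [dirVec, unitVec, ← sub_eq_add_neg]

section Reflection

variable {d : ℕ} (i : Fin d) (m : ℤ)

/-- The reflection of `ℤ^d` in the hyperplane `x i = m / 2`. -/
def mirror (x : Site d) : Site d := Function.update x i (m - x i)

/-- The signed distance from `x` to the hyperplane `x i = m / 2` of `mirror i m`. -/
def height (x : Site d) : ℝ := x i - m / 2

@[simp]
lemma mirror_apply_self (x : Site d) : mirror i m x i = m - x i := by simp [mirror]

@[simp]
lemma mirror_apply_of_ne {j : Fin d} (hj : j ≠ i) (x : Site d) : mirror i m x j = x j := by
  simp [mirror, hj]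

@[simp]
lemma mirror_mirror (x : Site d) : mirror i m (mirror i m x) = x := by simp [mirror]

@[simp]
lemma height_mirror (x : Site d) : height i m (mirror i m x) = -height i m x := by
  simp only [height, mirror_apply_self]
  push_cast
  ring

lemma exists_mirror_add_dirVec :
    ∃ σ : Dir d ≃ Dir d, ∀ x e,
      mirror i m (x + dirVec d e) = mirror i m x + dirVec d (σ e) := by
  let σ : Dir d → Dir d := fun e => if e.1 = i then oppDir d e else e
  have hσ : Function.Involutive σ := fun ⟨k, b⟩ => by
    by_cases h : k = i <;> simp [σ, oppDir, h]
  refine ⟨hσ.toPerm, fun x e => funext fun j => ?_⟩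
  obtain ⟨k, b⟩ := e
  rcases eq_or_ne k i with rfl | hk
  · rcases eq_or_ne j k with rfl | hj
    · cases b <;> simp [σ, dirVec, unitVec, oppDir] <;> ring
    · cases b <;> simp [σ, dirVec, unitVec, oppDir, hj]
  · rcases eq_or_ne j i with rfl | hj
    · cases b <;> simp [σ, dirVec, unitVec, hk, hk.symm]
    · cases b <;> simp [σ, dirVec, unitVec, hk, hj]

lemma lap_comp_mirror (f : Site d → ℝ) (x : Site d) :
    lap (fun x => f (mirror i m x)) x = lap f (mirror i m x) := by
  obtain ⟨σ, hσ⟩ := exists_mirror_add_dirVec i m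
  simp only [lap_apply, hσ]
  exact σ.sum_comp fun e => f (mirror i m x + dirVec d e) - f (mirror i m x)

end Reflection

section Barrier

variable {d : ℕ} (i : Fin d) (m : ℤ) (z : Site d) (ℓ : ℝ)

/-- The box of half-width `ℓ` around the `i`-parallel line through `z`, on the positive side of
the hyperplane `x i = m / 2` and within distance `ℓ` of it. -/
def slab : Set (Site d) :=
  {x | 0 < height i m x ∧ height i m x < ℓ ∧ ∀ j ≠ i, |(x j : ℝ) - z j| < ℓ}

/-- The squared distance from `x` to the `i`-parallel line through `z`. -/
def axisDistSq (x : Site d) : ℝ := ∑ j ∈ Finset.univ.erase i, ((x j : ℝ) - z j) ^ 2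

/-- A harmonic function which is at least `1` on the far sides of `slab i m z ℓ`, and of order
`1 / ℓ` near the centre `z` of its face on the hyperplane `x i = m / 2`. -/
def barrier (x : Site d) : ℝ :=
  (axisDistSq i z x + (-(d - 1) * (height i m x ^ 2 - 1 / 4) + 2 * d * ℓ * height i m x)) / ℓ ^ 2

lemma slab_finite : (slab i m z ℓ).Finite := by
  let t (j : Fin d) : Set ℤ :=
    Int.cast ⁻¹' if j = i then Set.Ioo (m / 2 : ℝ) (m / 2 + ℓ) else Set.Ioo (z j - ℓ) (z j + ℓ)
  have ht (j : Fin d) : (t j).Finite := by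
    by_cases hj : j = i <;> simp [t, hj, Int.preimage_Ioo, Set.finite_Ioo]
  refine (Set.Finite.pi' ht).subset fun x ⟨h0, hℓ, htrans⟩ j => ?_
  rw [height] at h0 hℓ
  by_cases hj : j = i
  · subst hj
    simp only [t, if_true, Set.mem_preimage, Set.mem_Ioo]
    constructor <;> linarith
  · obtain ⟨h1, h2⟩ := abs_lt.1 (htrans j hj)
    simp only [t, hj, if_false, Set.mem_preimage, Set.mem_Ioo]
    constructor <;> linarith

lemma axisDistSq_nonneg (x : Site d) : 0 ≤ axisDistSq i z x :=
  Finset.sum_nonneg fun _ _ => sq_nonneg _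

lemma lap_barrier (x : Site d) : lap (barrier i m z ℓ) x = 0 := by
  have hd : ((Finset.univ.erase i).card : ℝ) = d - 1 := by
    rw [Finset.card_erase_of_mem (Finset.mem_univ i), Finset.card_univ, Fintype.card_fin,
      Nat.cast_pred i.pos]
  have hdecomp : barrier i m z ℓ = (ℓ ^ 2)⁻¹ •
      (∑ j ∈ Finset.univ.erase i, (fun x : Site d => ((x j : ℝ) - z j) ^ 2) +
        fun x => -(d - 1) * ((x i - m / 2 : ℝ) ^ 2 - 1 / 4) + 2 * d * ℓ * (x i - m / 2)) := by
    funext x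
    simp [barrier, axisDistSq, height, div_eq_inv_mul]
  have htrans (j : Fin d) : lap (fun x : Site d => ((x j : ℝ) - z j) ^ 2) x = 2 := by
    rw [lap_comp_coord fun a => ((a : ℝ) - z j) ^ 2]
    push_cast
    ring
  have haxial : lap (fun x : Site d =>
      -(d - 1) * ((x i - m / 2 : ℝ) ^ 2 - 1 / 4) + 2 * d * ℓ * (x i - m / 2)) x = -2 * (d - 1) := by
    rw [lap_comp_coord fun a =>
      -(d - 1 : ℝ) * ((a - m / 2 : ℝ) ^ 2 - 1 / 4) + 2 * d * ℓ * (a - m / 2)]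
    push_cast
    ring
  rw [hdecomp, map_smul, map_add, map_sum, Pi.smul_apply, Pi.add_apply, Finset.sum_apply, haxial]
  simp only [htrans, Finset.sum_const, nsmul_eq_mul, hd, smul_eq_mul]
  ring

variable {i m z ℓ}

lemma one_le_barrier (hℓ : 0 < ℓ) {x : Site d} (h0 : 0 ≤ height i m x)
    (h2ℓ : height i m x ≤ 2 * ℓ) (hfar : ℓ ^ 2 ≤ axisDistSq i z x ∨ ℓ ≤ height i m x) :
    1 ≤ barrier i m z ℓ x := by
  have hd : (1 : ℝ) ≤ d := mod_cast i.pos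
  have haxial : 0 ≤ ((d : ℝ) - 1) * height i m x * (2 * ℓ - height i m x) :=
    mul_nonneg (mul_nonneg (by linarith) h0) (by linarith)
  rw [barrier, le_div_iff₀ (by positivity)]
  rcases hfar with hfar | hfar
  · nlinarith [mul_nonneg h0 hℓ.le]
  · nlinarith [axisDistSq_nonneg i z x, mul_le_mul_of_nonneg_right hfar hℓ.le]

lemma axisDistSq_mirror (x : Site d) : axisDistSq i z (mirror i m x) = axisDistSq i z x :=
  Finset.sum_congr rfl fun j hj => by rw [mirror_apply_of_ne i m (Finset.ne_of_mem_erase hj)]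

lemma barrier_add_barrier_mirror_nonneg {x : Site d} (hx : |height i m x| ≤ 1 / 2) :
    0 ≤ barrier i m z ℓ x + barrier i m z ℓ (mirror i m x) := by
  have hd : (1 : ℝ) ≤ d := mod_cast i.pos
  have hsq : height i m x ^ 2 ≤ 1 / 4 := by
    calc height i m x ^ 2 ≤ (1 / 2) ^ 2 := sq_le_sq' (abs_le.1 hx).1 (abs_le.1 hx).2
      _ = 1 / 4 := by norm_num
  rw [barrier, barrier, axisDistSq_mirror, height_mirror, ← add_div]
  refine div_nonneg ?_ (sq_nonneg _)
  nlinarith [axisDistSq_nonneg i z x, mul_nonneg (sub_nonneg.2 hd) (sub_nonneg.2 hsq)]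

lemma far_of_exit_slab_of_ne {x : Site d} (hℓ : 0 < ℓ) (hx : x ∈ slab i m z ℓ) {e : Dir d}
    (he : e.1 ≠ i) (hxe : x + dirVec d e ∉ slab i m z ℓ) :
    height i m (x + dirVec d e) = height i m x ∧ ℓ ^ 2 ≤ axisDistSq i z (x + dirVec d e) := by
  obtain ⟨h0, hlt, htrans⟩ := hx
  obtain ⟨k, b⟩ := e
  set w := x + dirVec d (k, b) with hw
  have hwj (j : Fin d) (hj : j ≠ k) : w j = x j := by
    cases b <;> simp [hw, dirVec, unitVec, hj]
  have hheight : height i m w = height i m x := by rw [height, hwj i he.symm, height]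
  have hfar : ℓ ≤ |(w k : ℝ) - z k| := by
    by_contra! hc
    refine hxe ⟨hheight ▸ h0, hheight ▸ hlt, fun j hj => ?_⟩
    rcases eq_or_ne j k with rfl | hjk
    · exact hc
    · exact hwj j hjk ▸ htrans j hj
  refine ⟨hheight, ?_⟩
  calc ℓ ^ 2 ≤ |(w k : ℝ) - z k| ^ 2 := by gcongr
    _ = ((w k : ℝ) - z k) ^ 2 := sq_abs _
    _ ≤ axisDistSq i z w := Finset.single_le_sum (f := fun j => ((w j : ℝ) - z j) ^ 2)
        (fun _ _ => sq_nonneg _) (Finset.mem_erase.2 ⟨he, Finset.mem_univ k⟩)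

lemma far_of_exit_slab_pos {x : Site d} (hx : x ∈ slab i m z ℓ)
    (hxe : x + dirVec d (i, true) ∉ slab i m z ℓ) :
    height i m (x + dirVec d (i, true)) = height i m x + 1 ∧
      ℓ ≤ height i m (x + dirVec d (i, true)) := by
  obtain ⟨h0, -, htrans⟩ := hx
  have hheight : height i m (x + dirVec d (i, true)) = height i m x + 1 := by
    simp [height, dirVec, unitVec]
    ring
  refine ⟨hheight, ?_⟩
  by_contra! hc
  exact hxe ⟨by linarith, hc, fun j hj => by simpa [dirVec, unitVec, hj] using htrans j hj⟩

lemma near_mirror_of_exit_slab_neg {x : Site d} (hx : x ∈ slab i m z ℓ)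
    (hxe : x + dirVec d (i, false) ∉ slab i m z ℓ) :
    |height i m (x + dirVec d (i, false))| ≤ 1 / 2 ∧
      (mirror i m (x + dirVec d (i, false)) = x + dirVec d (i, false) ∨
        mirror i m (x + dirVec d (i, false)) = x) := by
  obtain ⟨h0, hlt, htrans⟩ := hx
  set w := x + dirVec d (i, false) with hw
  have hwi : w i = x i - 1 := by simp [hw, dirVec, unitVec, sub_eq_add_neg]
  have hwj (j : Fin d) (hj : j ≠ i) : w j = x j := by simp [hw, dirVec, unitVec, hj]
  have hheight : height i m w = height i m x - 1 := by
    rw [height, hwi, height]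
    push_cast
    ring
  have hle : height i m w ≤ 0 := by
    by_contra! hc
    exact hxe ⟨hc, by linarith, fun j hj => hwj j hj ▸ htrans j hj⟩
  have hx_height : height i m x = x i - m / 2 := rfl
  have hpos : 0 < 2 * x i - m := by exact_mod_cast (by linarith : (0 : ℝ) < 2 * x i - m)
  have hle2 : 2 * x i - m ≤ 2 := by exact_mod_cast (by linarith : (2 * x i - m : ℝ) ≤ 2)
  rcases (by omega : 2 * x i - m = 1 ∨ 2 * x i - m = 2) with h | h
  · have hR : (2 * x i - m : ℝ) = 1 := mod_cast h
    refine ⟨abs_le.2 ⟨by linarith, by linarith⟩, Or.inr (funext fun j => ?_)⟩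
    rcases eq_or_ne j i with rfl | hj
    · rw [mirror_apply_self]; omega
    · rw [mirror_apply_of_ne i m hj, hwj j hj]
  · have hR : (2 * x i - m : ℝ) = 2 := mod_cast h
    refine ⟨abs_le.2 ⟨by linarith, by linarith⟩, Or.inl (funext fun j => ?_)⟩
    rcases eq_or_ne j i with rfl | hj
    · rw [mirror_apply_self]; omega
    · rw [mirror_apply_of_ne i m hj]

lemma exit_slab {x : Site d} (hℓ : 1 ≤ ℓ) (hx : x ∈ slab i m z ℓ) {e : Dir d}
    (hxe : x + dirVec d e ∉ slab i m z ℓ) :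
    1 ≤ barrier i m z ℓ (x + dirVec d e) ∨
    |height i m (x + dirVec d e)| ≤ 1 / 2 ∧
      (mirror i m (x + dirVec d e) = x + dirVec d e ∨ mirror i m (x + dirVec d e) = x) := by
  have hℓ' : 0 < ℓ := by linarith
  obtain ⟨k, b⟩ := e
  rcases eq_or_ne k i with rfl | hk
  · cases b
    · exact Or.inr (near_mirror_of_exit_slab_neg hx hxe)
    · obtain ⟨hh, hfar⟩ := far_of_exit_slab_pos hx hxe
      exact Or.inl (one_le_barrier hℓ' (by linarith [hx.1]) (by linarith [hx.2.1]) (Or.inr hfar))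
  · obtain ⟨hh, hfar⟩ := far_of_exit_slab_of_ne hℓ' hx hk hxe
    exact Or.inl (one_le_barrier hℓ' (by linarith [hx.1]) (by linarith [hx.2.1]) (Or.inl hfar))

theorem le_mul_barrier_of_antisymmetric {g : Site d → ℝ} {M : ℝ} (hℓ : 1 ≤ ℓ)
    (hM : ∀ x, g x ≤ M) (hanti : ∀ x, g (mirror i m x) = -g x)
    (hharm : ∀ x ∈ slab i m z ℓ, lap g x = 0) :
    ∀ x ∈ slab i m z ℓ, g x ≤ M * barrier i m z ℓ x := by
  have : NeZero d := ⟨i.pos.ne'⟩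
  have hM_nonneg : 0 ≤ M := by linarith [hM z, hM (mirror i m z), hanti z]
  suffices ∀ x ∈ (slab_finite i m z ℓ).toFinset, 0 ≤ (M • barrier i m z ℓ - g) x from
    fun x hx => sub_nonneg.1 (this x ((slab_finite i m z ℓ).mem_toFinset.2 hx))
  refine nonneg_of_lap_nonpos (fun x hx _ => ?_) fun x hx hneg e he => ?_
  · rw [map_sub, map_smul, Pi.sub_apply, Pi.smul_apply, lap_barrier,
      hharm x ((slab_finite i m z ℓ).mem_toFinset.1 hx), smul_zero, sub_zero]
  rw [Set.Finite.mem_toFinset] at hx he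
  simp only [Pi.sub_apply, Pi.smul_apply, smul_eq_mul] at hneg ⊢
  rcases exit_slab hℓ hx he with hfar | ⟨hnear, hmirror⟩
  · nlinarith [hM (x + dirVec d e), mul_nonneg hM_nonneg (sub_nonneg.2 hfar)]
  · have hsum := mul_nonneg hM_nonneg (barrier_add_barrier_mirror_nonneg (z := z) (ℓ := ℓ) hnear)
    have hanti := hanti (x + dirVec d e)
    rcases hmirror with h | h <;> rw [h] at hsum hanti <;> linarith

lemma self_mem_slab (hz : 0 < height i m z) (hzℓ : height i m z < ℓ) : z ∈ slab i m z ℓ :=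
  ⟨hz, hzℓ, fun j _ => by simpa using hz.trans hzℓ⟩

lemma barrier_self_le (z : Site d) (hℓ : 1 ≤ ℓ) :
    barrier i m z ℓ z ≤ d * (2 * height i m z + 1) / ℓ := by
  have hd : (1 : ℝ) ≤ d := mod_cast i.pos
  have hℓ' : 0 < ℓ := by linarith
  have haxis : axisDistSq i z z = 0 := by simp [axisDistSq]
  rw [barrier, haxis, div_le_div_iff₀ (by positivity) hℓ']
  nlinarith [mul_nonneg (mul_nonneg (sub_nonneg.2 hd) (sq_nonneg (height i m z))) hℓ'.le,
    mul_nonneg (mul_nonneg (by linarith : (0 : ℝ) ≤ d) hℓ'.le) (sub_nonneg.2 hℓ)]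

theorem abs_sub_mirror_le {f : Site d → ℝ} {M : ℝ} (hℓ : 1 ≤ ℓ) (hf : ∀ x, f x ∈ Set.Icc 0 M)
    (hharm : ∀ x ∈ slab i m z ℓ, lap f x = 0 ∧ lap f (mirror i m x) = 0)
    (hz : 0 < height i m z) (hzℓ : height i m z < ℓ) :
    |f z - f (mirror i m z)| ≤ M * (d * (2 * height i m z + 1) / ℓ) := by
  have hM_nonneg : 0 ≤ M := (hf z).1.trans (hf z).2
  let f' : Site d → ℝ := fun x => f (mirror i m x)
  have hlap {x : Site d} (hx : x ∈ slab i m z ℓ) : lap f x = 0 ∧ lap f' x = 0 :=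
    ⟨(hharm x hx).1, (lap_comp_mirror i m f x).trans (hharm x hx).2⟩
  have hz_mem := self_mem_slab hz hzℓ
  have hbarrier := mul_le_mul_of_nonneg_left (barrier_self_le (m := m) (i := i) z hℓ) hM_nonneg
  refine abs_sub_le_iff.2 ⟨le_trans ?_ hbarrier, le_trans ?_ hbarrier⟩
  · refine le_mul_barrier_of_antisymmetric (g := f - f') hℓ (fun x => ?_) (fun x => ?_)
      (fun x hx => ?_) z hz_mem
    · exact (sub_le_self _ (hf _).1).trans (hf x).2
    · simp [f']
    · simp [hlap hx]
  · refine le_mul_barrier_of_antisymmetric (g := f' - f) hℓ (fun x => ?_) (fun x => ?_)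
      (fun x hx => ?_) z hz_mem
    · exact (sub_le_self _ (hf x).1).trans (hf _).2
    · simp [f']
    · simp [hlap hx]

lemma abs_apply_le_of_mem_slab {k : ℝ} (hm : |(m : ℝ)| ≤ k) (hz : ∀ j ≠ i, |(z j : ℝ)| ≤ k)
    {x : Site d} (hx : x ∈ slab i m z ℓ) (j : Fin d) :
    |(x j : ℝ)| ≤ k + ℓ ∧ |(mirror i m x j : ℝ)| ≤ k + ℓ := by
  obtain ⟨h0, hlt, htrans⟩ := hx
  rcases eq_or_ne j i with rfl | hj
  · have := abs_le.1 hm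
    rw [mirror_apply_self, height] at *
    push_cast
    constructor <;> rw [abs_le] <;> constructor <;> linarith
  · rw [mirror_apply_of_ne i m hj, and_self]
    calc |(x j : ℝ)| = |z j + (x j - z j : ℝ)| := by ring_nf
      _ ≤ |(z j : ℝ)| + |(x j - z j : ℝ)| := abs_add_le _ _
      _ ≤ k + ℓ := add_le_add (hz j hj) (htrans j hj).le

end Barrier

section Oscillation

variable {d : ℕ} {f : Site d → ℝ} {M k ℓ : ℝ} {y : Site d}

lemma abs_sub_update_zero_le (hℓ : 1 ≤ ℓ) (hkℓ : k ≤ ℓ) (hf : ∀ x, f x ∈ Set.Icc 0 M)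
    (hharm : ∀ x : Site d, (∀ j, |(x j : ℝ)| ≤ k + ℓ) → lap f x = 0)
    (hy : ∀ j, |(y j : ℝ)| ≤ k) (i : Fin d) :
    |f y - f (Function.update y i 0)| ≤ M * (d * (k + 1) / ℓ) := by
  have hM_nonneg : 0 ≤ M := (hf y).1.trans (hf y).2
  have hk_nonneg : 0 ≤ k := (abs_nonneg _).trans (hy i)
  have hmirror : mirror i (y i) y = Function.update y i 0 := by simp [mirror]
  suffices ∀ z, (∀ j ≠ i, |(z j : ℝ)| ≤ k) → 0 < height i (y i) z → 2 * height i (y i) z ≤ k →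
      |f z - f (mirror i (y i) z)| ≤ M * (d * (k + 1) / ℓ) by
    obtain ⟨hlo, hhi⟩ := abs_le.1 (hy i)
    rcases lt_trichotomy (y i) 0 with hneg | hzero | hpos
    · have hyi : (y i : ℝ) < 0 := mod_cast hneg
      have hheight : height i (y i) (mirror i (y i) y) = -y i / 2 := by
        rw [height_mirror, height]
        ring
      rw [abs_sub_comm, ← hmirror]
      simpa using this (mirror i (y i) y) (fun j hj => by simpa [hj] using hy j)
        (by linarith) (by linarith)
    · rw [← hzero, Function.update_eq_self, sub_self, abs_zero]
      positivity
    · have hyi : (0 : ℝ) < y i := mod_cast hpos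
      have hheight : height i (y i) y = y i / 2 := by
        rw [height]
        ring
      rw [← hmirror]
      exact this y (fun j _ => hy j) (by linarith) (by linarith)
  intro z hz h0 hhk
  calc |f z - f (mirror i (y i) z)| ≤ M * (d * (2 * height i (y i) z + 1) / ℓ) := by
        refine abs_sub_mirror_le hℓ hf (fun x hx => ?_) h0 (by linarith)
        have hx_le := abs_apply_le_of_mem_slab (hy i) hz hx
        exact ⟨hharm x fun j => (hx_le j).1, hharm _ fun j => (hx_le j).2⟩
    _ ≤ M * (d * (k + 1) / ℓ) := by gcongr

theorem abs_sub_apply_zero_le (hℓ : 1 ≤ ℓ) (hkℓ : k ≤ ℓ) (hf : ∀ x, f x ∈ Set.Icc 0 M)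
    (hharm : ∀ x : Site d, (∀ j, |(x j : ℝ)| ≤ k + ℓ) → lap f x = 0)
    (hy : ∀ j, |(y j : ℝ)| ≤ k) :
    |f y - f 0| ≤ d * (M * (d * (k + 1) / ℓ)) := by
  suffices ∀ s : Finset (Fin d),
      |f (s.piecewise y 0) - f 0| ≤ s.card * (M * (d * (k + 1) / ℓ)) by
    simpa using this Finset.univ
  intro s
  induction s using Finset.induction_on with
  | empty => simp
  | insert a s ha ih =>
    have hupdate : Function.update ((insert a s).piecewise y 0) a 0 = s.piecewise y 0 := by
      funext j
      rcases eq_or_ne j a with rfl | hj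
      · simp [ha]
      · simp [hj, Finset.piecewise]
    have hstep := abs_sub_update_zero_le (y := (insert a s).piecewise y 0) hℓ hkℓ hf hharm
      (fun j => by
        by_cases hj : j ∈ insert a s
        · simpa [hj] using hy j
        · simpa [hj] using (abs_nonneg _).trans (hy j)) a
    rw [hupdate] at hstep
    calc |f ((insert a s).piecewise y 0) - f 0|
        ≤ |f ((insert a s).piecewise y 0) - f (s.piecewise y 0)| + |f (s.piecewise y 0) - f 0| :=
          abs_sub_le _ _ _
      _ ≤ M * (d * (k + 1) / ℓ) + s.card * (M * (d * (k + 1) / ℓ)) := add_le_add hstep ih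
      _ = (insert a s).card * (M * (d * (k + 1) / ℓ)) := by
          rw [Finset.card_insert_of_notMem ha]
          push_cast
          ring

end Oscillation
/-! ### Radial comparison functions -/

section Taylor

variable {f f' f'' f''' : ℝ → ℝ} {s : Set ℝ} {C a b : ℝ}

lemma abs_sub_le_mul_abs_sub_pow_succ (hs : s.OrdConnected) {n : ℕ}
    (hf : ∀ t ∈ s, HasDerivWithinAt f (f' t) s t) (hbound : ∀ t ∈ s, |f' t| ≤ C * |t - a| ^ n)
    (hC : 0 ≤ C) (ha : a ∈ s) (hb : b ∈ s) :
    |f b - f a| ≤ C * |b - a| ^ (n + 1) := by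
  have hsub : Set.uIcc a b ⊆ s := hs.uIcc_subset ha hb
  rw [pow_succ, ← mul_assoc]
  refine (convex_uIcc a b).norm_image_sub_le_of_norm_hasDerivWithin_le
    (fun t ht => (hf t (hsub ht)).mono hsub) (fun t ht => ?_) Set.left_mem_uIcc Set.right_mem_uIcc
  exact (hbound t (hsub ht)).trans
    (by gcongr C * ?_ ^ n; exact Set.abs_sub_left_of_mem_uIcc ht)

theorem abs_sub_taylor_two_le (hs : s.OrdConnected)
    (hf : ∀ t ∈ s, HasDerivWithinAt f (f' t) s t)
    (hf' : ∀ t ∈ s, HasDerivWithinAt f' (f'' t) s t)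
    (hf'' : ∀ t ∈ s, HasDerivWithinAt f'' (f''' t) s t)
    (hC : ∀ t ∈ s, |f''' t| ≤ C) (ha : a ∈ s) (hb : b ∈ s) :
    |f b - (f a + f' a * (b - a) + f'' a * (b - a) ^ 2 / 2)| ≤ C * |b - a| ^ 3 := by
  have hC_nonneg : 0 ≤ C := (abs_nonneg _).trans (hC a ha)
  have hsecond (t : ℝ) (ht : t ∈ s) : |f'' t - f'' a| ≤ C * |t - a| ^ 1 :=
    abs_sub_le_mul_abs_sub_pow_succ (n := 0) hs hf'' (fun u hu => by simpa using hC u hu)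
      hC_nonneg ha ht
  have hfirst (t : ℝ) (ht : t ∈ s) : |f' t - f' a - f'' a * (t - a)| ≤ C * |t - a| ^ 2 := by
    have := abs_sub_le_mul_abs_sub_pow_succ (n := 1)
      (f := fun u => f' u - f'' a * (u - a)) hs
      (fun u hu => (hf' u hu).sub (((hasDerivAt_id u).sub_const a).const_mul _).hasDerivWithinAt)
      (fun u hu => by simpa using hsecond u hu) hC_nonneg ha ht
    convert this using 2
    ring
  have := abs_sub_le_mul_abs_sub_pow_succ
    (f := fun u => f u - f' a * (u - a) - f'' a * (u - a) ^ 2 / 2) hs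
    (fun u hu => ((hf u hu).sub (((hasDerivAt_id u).sub_const a).const_mul _).hasDerivWithinAt).sub
      (((((hasDerivAt_id u).sub_const a).pow 2).const_mul _).div_const 2).hasDerivWithinAt)
    (fun u hu => by
      convert hfirst u hu using 2
      simp
      ring) hC_nonneg ha hb
  convert this using 2
  ring

end Taylor

section Profile

variable (d : ℕ) (η : ℝ)

/-- The power `t ↦ t ^ (-d / 2)`, made constant on `t ≤ η ^ 2`. -/
def truncPow (t : ℝ) : ℝ := max t (η ^ 2) ^ (-(d / 2) : ℝ)

/-- The profile `F` of the comparison function `x ↦ R ^ 2 * F (‖x‖ ^ 2 / R ^ 2)`. Its derivative is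
`1 - s ^ (-d / 2)` for `s ≥ η ^ 2`, so that the comparison function has Laplacian about `2 * d`
away from the origin while touching `0` to second order on the sphere of radius `R`. -/
def profile (s : ℝ) : ℝ := ∫ t in (1 : ℝ)..s, (1 - truncPow d η t)

/-- A bound for the third derivative of `profile d η` on `s ≥ η ^ 2`. -/
def profileTaylorConst : ℝ := d / 2 * (d / 2 + 1) * (η ^ 2) ^ (-(d / 2) - 2 : ℝ)

/-- A lower bound for `profile d η` on `s ≤ a ^ 2`, uniform in `η ≤ √a`. -/
def profileGap (a : ℝ) : ℝ := (a ^ (-(d / 2) : ℝ) - 1) * ((1 - a) * a)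

@[simp]
lemma profile_one : profile d η 1 = 0 := intervalIntegral.integral_same

lemma profileTaylorConst_nonneg : 0 ≤ profileTaylorConst d η := by
  rw [profileTaylorConst]
  positivity

lemma profileGap_pos [NeZero d] {a : ℝ} (ha : 0 < a) (ha' : a < 1) : 0 < profileGap d a := by
  have hd : (0 : ℝ) < d := by exact_mod_cast NeZero.pos d
  have : 1 < a ^ (-(d / 2) : ℝ) := Real.one_lt_rpow_of_pos_of_lt_one_of_neg ha ha' (by linarith)
  exact mul_pos (by linarith) (mul_pos (by linarith) ha)

lemma truncPow_nonneg (t : ℝ) : 0 ≤ truncPow d η t :=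
  Real.rpow_nonneg (le_max_of_le_right (sq_nonneg η)) _

variable {d η}

lemma truncPow_of_le {t : ℝ} (ht : η ^ 2 ≤ t) : truncPow d η t = t ^ (-(d / 2) : ℝ) := by
  rw [truncPow, max_eq_left ht]

variable (hη : 0 < η)
include hη

lemma continuous_truncPow : Continuous (truncPow d η) :=
  (continuous_id.max continuous_const).rpow_const fun _ =>
    Or.inl (lt_max_of_lt_right (by positivity)).ne'

lemma antitone_truncPow : Antitone (truncPow d η) := fun _ _ hab =>
  Real.rpow_le_rpow_of_nonpos (lt_max_of_lt_right (by positivity)) (max_le_max_right _ hab)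
    (neg_nonpos.2 (by positivity))

lemma truncPow_le (t : ℝ) : truncPow d η t ≤ (η ^ d)⁻¹ := by
  calc truncPow d η t ≤ (η ^ 2 : ℝ) ^ (-(d / 2) : ℝ) :=
        Real.rpow_le_rpow_of_nonpos (by positivity) (le_max_right _ _)
          (neg_nonpos.2 (by positivity))
    _ = (η ^ d)⁻¹ := by
        rw [← Real.rpow_natCast_mul hη.le, ← Real.rpow_natCast η d, ← Real.rpow_neg hη.le]
        push_cast
        ring_nf

lemma hasDerivAt_profile (s : ℝ) : HasDerivAt (profile d η) (1 - truncPow d η s) s :=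
  have hcont : Continuous fun t => 1 - truncPow d η t :=
    continuous_const.sub (continuous_truncPow hη)
  intervalIntegral.integral_hasDerivAt_right (hcont.intervalIntegrable _ _)
    (hcont.stronglyMeasurableAtFilter _ _) hcont.continuousAt

lemma convexOn_profile : ConvexOn ℝ Set.univ (profile d η) := by
  have hderiv : deriv (profile d η) = fun t => 1 - truncPow d η t :=
    funext fun t => (hasDerivAt_profile hη t).deriv
  refine Monotone.convexOn_univ_of_deriv
    (fun t => (hasDerivAt_profile hη t).differentiableAt) ?_
  rw [hderiv]
  exact fun a b hab => sub_le_sub_left (antitone_truncPow hη hab) 1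

lemma profile_add_mul_sub_le (a b : ℝ) :
    profile d η a + (1 - truncPow d η a) * (b - a) ≤ profile d η b := by
  have hconv := convexOn_profile (d := d) hη
  have hderiv := hasDerivAt_profile (d := d) hη a
  rcases lt_trichotomy a b with hab | rfl | hab
  · have := hconv.le_slope_of_hasDerivAt (Set.mem_univ a) (Set.mem_univ b) hab hderiv
    rw [slope_def_field, le_div_iff₀ (sub_pos.2 hab)] at this
    linarith
  · simp
  · have := hconv.slope_le_of_hasDerivAt (Set.mem_univ b) (Set.mem_univ a) hab hderiv
    rw [slope_def_field, div_le_iff₀ (sub_pos.2 hab)] at this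
    linarith

lemma profile_le_sub_one {s : ℝ} (hs : 1 ≤ s) : profile d η s ≤ s - 1 := by
  have htangent := profile_add_mul_sub_le (d := d) hη s 1
  rw [profile_one] at htangent
  nlinarith [truncPow_nonneg d η s]

lemma le_profile_of_le_sq {s a : ℝ} (hηa : η ^ 2 ≤ a) (ha : a ≤ 1) (hs : s ≤ a ^ 2) :
    profileGap d a ≤ profile d η s := by
  have ha_pos : 0 < a := lt_of_lt_of_le (by positivity) hηa
  have hone : 1 ≤ a ^ (-(d / 2) : ℝ) :=
    Real.one_le_rpow_of_pos_of_le_one_of_nonpos ha_pos ha (neg_nonpos.2 (by positivity))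
  have htangent_one := profile_add_mul_sub_le (d := d) hη 1 a
  have htangent := profile_add_mul_sub_le (d := d) hη a s
  rw [profile_one, truncPow_of_le (hηa.trans ha), Real.one_rpow] at htangent_one
  rw [truncPow_of_le hηa] at htangent
  rw [profileGap]
  nlinarith [mul_nonneg (sub_nonneg.2 hone) (sub_nonneg.2 hs)]

lemma le_profile_of_sq_le {a b : ℝ} (ha : η ^ 2 ≤ a) (hb : η ^ 2 ≤ b) :
    profile d η a + (1 - truncPow d η a) * (b - a) +
      d / 2 * a ^ (-(d / 2) - 1 : ℝ) * (b - a) ^ 2 / 2 - profileTaylorConst d η * |b - a| ^ 3 ≤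
    profile d η b := by
  have hη2 : 0 < η ^ 2 := by positivity
  have hq : (0 : ℝ) ≤ d / 2 := by positivity
  have hderiv (p t : ℝ) (ht : t ∈ Set.Ici (η ^ 2)) :
      HasDerivWithinAt (fun t : ℝ => t ^ p) (p * t ^ (p - 1)) (Set.Ici (η ^ 2)) t :=
    (Real.hasDerivAt_rpow_const (Or.inl (hη2.trans_le ht).ne')).hasDerivWithinAt
  have htaylor := abs_sub_taylor_two_le (f := profile d η) (a := a) (b := b)
    (f''' := fun t => d / 2 * ((-(d / 2) - 1) * t ^ (-(d / 2) - 1 - 1 : ℝ)))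
    (C := profileTaylorConst d η) Set.ordConnected_Ici
    (fun t ht => truncPow_of_le (d := d) ht ▸ (hasDerivAt_profile hη t).hasDerivWithinAt)
    (fun t ht => ((hderiv (-(d / 2)) t ht).const_sub 1).congr_deriv (by ring))
    (fun t ht => (hderiv (-(d / 2) - 1) t ht).const_mul (d / 2 : ℝ)) (fun t ht => ?_) ha hb
  · rw [truncPow_of_le ha]
    linarith [(abs_le.1 htaylor).1]
  · have ht_pos : 0 < t := hη2.trans_le ht
    rw [abs_mul, abs_mul, abs_of_nonneg hq, abs_of_nonneg (Real.rpow_nonneg ht_pos.le _),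
      abs_of_nonpos (by linarith), ← mul_assoc, profileTaylorConst,
      show (-(d / 2) - 1 - 1 : ℝ) = -(d / 2) - 2 by ring,
      show -(-(d / 2) - 1 : ℝ) = d / 2 + 1 by ring]
    gcongr ?_ * ?_
    exact Real.rpow_le_rpow_of_nonpos hη2 ht (by linarith)

end Profile

section LatticePoint

variable {d : ℕ}

/-- The site `x`, as a point of Euclidean space. -/
def latticePoint (x : Site d) : EuclideanSpace ℝ (Fin d) := WithLp.toLp 2 fun i => (x i : ℝ)

lemma norm_latticePoint (x : Site d) : ‖latticePoint x‖ = enorm x := by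
  simp [EuclideanSpace.norm_eq, latticePoint, enorm, nsq]

lemma latticePoint_add (x y : Site d) :
    latticePoint (x + y) = latticePoint x + latticePoint y := by
  ext
  simp [latticePoint]

lemma enorm_nonneg (x : Site d) : 0 ≤ enorm x := Real.sqrt_nonneg _

lemma enorm_sq (x : Site d) : enorm x ^ 2 = nsq x := Real.sq_sqrt (nsq_nonneg x)

lemma enorm_add_le (x y : Site d) : enorm (x + y) ≤ enorm x + enorm y := by
  simpa only [← norm_latticePoint, latticePoint_add] using norm_add_le _ _

lemma enorm_dirVec (e : Dir d) : enorm (dirVec d e) = 1 := by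
  rw [enorm, ← zero_add (dirVec d e), nsq_add_dirVec]
  simp

lemma enorm_add_dirVec_le (x : Site d) (e : Dir d) : enorm (x + dirVec d e) ≤ enorm x + 1 :=
  enorm_dirVec e ▸ enorm_add_le x (dirVec d e)

lemma enorm_le_enorm_add_dirVec (x : Site d) (e : Dir d) :
    enorm x ≤ enorm (x + dirVec d e) + 1 := by
  simpa using enorm_add_dirVec_le (x + dirVec d e) (oppDir d e)

lemma abs_apply_le_enorm (x : Site d) (i : Fin d) : |(x i : ℝ)| ≤ enorm x := by
  rw [← norm_latticePoint]
  simpa [latticePoint] using PiLp.norm_apply_le (latticePoint x) i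

lemma enorm_le_mul_of_abs_apply_le {x : Site d} {k : ℝ} (hx : ∀ i, |(x i : ℝ)| ≤ k) :
    enorm x ≤ d * k := by
  calc enorm x ≤ ∑ i, |(x i : ℝ)| := by
        refine Real.sqrt_le_iff.2 ⟨Finset.sum_nonneg fun _ _ => abs_nonneg _, ?_⟩
        simpa only [nsq, sq_abs] using
          Finset.sum_sq_le_sq_sum_of_nonneg (s := Finset.univ) fun i _ => abs_nonneg (x i : ℝ)
    _ ≤ d * k := by simpa using Finset.sum_le_card_nsmul Finset.univ _ k fun i _ => hx i

lemma abs_nsq_add_dirVec_sub_le (x : Site d) (e : Dir d) :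
    |nsq (x + dirVec d e) - nsq x| ≤ 2 * enorm x + 1 := by
  have hcoord := abs_le.1 (abs_apply_le_enorm x e.1)
  rw [nsq_add_dirVec, abs_le]
  split_ifs <;> constructor <;> linarith

lemma sum_nsq_sub_sq (x : Site d) :
    ∑ e, (nsq (x + dirVec d e) - nsq x) ^ 2 = 8 * nsq x + 2 * d := by
  have h (i : Fin d) :
      ∑ b, (nsq (x + dirVec d (i, b)) - nsq x) ^ 2 = 8 * (x i : ℝ) ^ 2 + 2 := by
    simp only [nsq_add_dirVec, Fintype.sum_bool, if_true, Bool.false_eq_true, if_false]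
    ring
  rw [Fintype.sum_prod_type]
  simp only [h, Finset.sum_add_distrib, ← Finset.mul_sum, Finset.sum_const, Finset.card_univ,
    Fintype.card_fin, nsmul_eq_mul, mul_comm (2 : ℝ)]
  rfl

end LatticePoint

section Radial

variable {d : ℕ} {F : ℝ → ℝ} {R g : ℝ} {x : Site d}

/-- The radial function with profile `F` at scale `R`. -/
def radial (F : ℝ → ℝ) (R : ℝ) (x : Site d) : ℝ := R ^ 2 * F (nsq x / R ^ 2)

lemma le_lap_radial_of_subgradient (hR : 0 < R)
    (hF : ∀ s, F (nsq x / R ^ 2) + g * (s - nsq x / R ^ 2) ≤ F s) :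
    2 * d * g ≤ lap (radial F R) x := by
  rw [mul_comm, ← lap_nsq x, lap_apply, lap_apply, Finset.mul_sum]
  gcongr with e
  have := mul_le_mul_of_nonneg_left (hF (nsq (x + dirVec d e) / R ^ 2)) (sq_nonneg R)
  have hscale : R ^ 2 * (g * (nsq (x + dirVec d e) / R ^ 2 - nsq x / R ^ 2)) =
      g * (nsq (x + dirVec d e) - nsq x) := by field_simp
  rw [radial, radial]
  linarith

lemma le_lap_radial_of_taylor {h C : ℝ} (hR : 1 ≤ R) (hx : enorm x ≤ R) (hh : 0 ≤ h)
    (hC : 0 ≤ C)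
    (hF : ∀ e, let a := nsq x / R ^ 2; let b := nsq (x + dirVec d e) / R ^ 2
      F a + g * (b - a) + h * (b - a) ^ 2 / 2 - C * |b - a| ^ 3 ≤ F b) :
    2 * d * g + 4 * (h * (nsq x / R ^ 2)) - 2 * d * (27 * C / R) ≤ lap (radial F R) x := by
  have hR_pos : 0 < R := by linarith
  have hstep (e : Dir d) : g * (nsq (x + dirVec d e) - nsq x) +
      h / 2 / R ^ 2 * (nsq (x + dirVec d e) - nsq x) ^ 2 - 27 * C / R ≤
        radial F R (x + dirVec d e) - radial F R x := by
    set v := nsq (x + dirVec d e) - nsq x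
    have hv_le : |v| ≤ 3 * R := (abs_nsq_add_dirVec_sub_le x e).trans (by linarith)
    have hdiff : nsq (x + dirVec d e) / R ^ 2 - nsq x / R ^ 2 = v / R ^ 2 := (sub_div ..).symm
    have hcube : R ^ 2 * (C * |v / R ^ 2| ^ 3) ≤ 27 * C / R := by
      calc R ^ 2 * (C * |v / R ^ 2| ^ 3) = C * |v| ^ 3 / R ^ 4 := by
            rw [abs_div, abs_of_pos (pow_pos hR_pos 2)]
            field_simp
        _ ≤ C * (3 * R) ^ 3 / R ^ 4 := by gcongr
        _ = 27 * C / R := by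
            field_simp
            ring
    have hmul := mul_le_mul_of_nonneg_left (hF e) (sq_nonneg R)
    rw [hdiff] at hmul
    have hscale : R ^ 2 * (F (nsq x / R ^ 2) + g * (v / R ^ 2) + h * (v / R ^ 2) ^ 2 / 2 -
        C * |v / R ^ 2| ^ 3) = R ^ 2 * F (nsq x / R ^ 2) + g * v + h / 2 / R ^ 2 * v ^ 2 -
          R ^ 2 * (C * |v / R ^ 2| ^ 3) := by
      field_simp
    rw [radial, radial]
    linarith
  calc 2 * d * g + 4 * (h * (nsq x / R ^ 2)) - 2 * d * (27 * C / R)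
      ≤ 2 * d * g + h / 2 / R ^ 2 * (8 * nsq x + 2 * d) - 2 * d * (27 * C / R) := by
        have : 0 ≤ h / R ^ 2 * d := by positivity
        have hexpand : h / 2 / R ^ 2 * (8 * nsq x + 2 * d) =
            4 * (h * (nsq x / R ^ 2)) + h / R ^ 2 * d := by ring
        linarith
    _ = ∑ e, (g * (nsq (x + dirVec d e) - nsq x) +
          h / 2 / R ^ 2 * (nsq (x + dirVec d e) - nsq x) ^ 2 - 27 * C / R) := by
        rw [Finset.sum_sub_distrib, Finset.sum_add_distrib, ← Finset.mul_sum, ← Finset.mul_sum,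
          ← lap_apply, lap_nsq, sum_nsq_sub_sq, Finset.sum_const, Finset.card_univ,
          Fintype.card_prod, Fintype.card_fin, Fintype.card_bool, nsmul_eq_mul]
        push_cast
        ring
    _ ≤ lap (radial F R) x := lap_apply (radial F R) x ▸ Finset.sum_le_sum fun e _ => hstep e

end Radial

section Comparison

variable {d : ℕ} {η R : ℝ} {x : Site d} (hη : 0 < η)
include hη

lemma le_lap_radial_profile (hR : 0 < R) :
    2 * d * (1 - (η ^ d)⁻¹) ≤ lap (radial (profile d η) R) x := by
  refine le_trans ?_ (le_lap_radial_of_subgradient hR fun s => profile_add_mul_sub_le hη _ s)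
  gcongr
  exact truncPow_le hη _

lemma le_lap_radial_profile_of_far (hR : 1 ≤ R) (hx : η * R + 1 ≤ enorm x)
    (hxR : enorm x ≤ R) :
    2 * d * (1 - 27 * profileTaylorConst d η / R) ≤ lap (radial (profile d η) R) x := by
  have hR_pos : 0 < R := by linarith
  have : 0 < η * R := mul_pos hη hR_pos
  have hfar (y : Site d) (hy : η * R ≤ enorm y) : η ^ 2 ≤ nsq y / R ^ 2 := by
    rw [← enorm_sq, le_div_iff₀ (by positivity), ← mul_pow]
    gcongr
  have hsx := hfar x (by linarith)
  set s := nsq x / R ^ 2 with hs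
  have hs_pos : 0 < s := lt_of_lt_of_le (by positivity) hsx
  have htaylor := le_lap_radial_of_taylor (F := profile d η) (g := 1 - truncPow d η s)
    (h := d / 2 * s ^ (-(d / 2) - 1 : ℝ)) hR hxR (by positivity) (profileTaylorConst_nonneg d η)
    fun e => le_profile_of_sq_le hη hsx
      (hfar _ (by linarith [enorm_le_enorm_add_dirVec x e]))
  have hsecond : d / 2 * s ^ (-(d / 2) - 1 : ℝ) * s = d / 2 * truncPow d η s := by
    rw [truncPow_of_le hsx, mul_assoc, ← Real.rpow_add_one hs_pos.ne', sub_add_cancel]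
  rw [← hs, hsecond] at htaylor
  linarith

lemma radial_profile_le (hR : 0 < R) (hx : R ≤ enorm x) (hxR : enorm x ≤ R + 1) :
    radial (profile d η) R x ≤ 2 * R + 1 := by
  have hnsq : R ^ 2 ≤ nsq x := enorm_sq x ▸ pow_le_pow_left₀ hR.le hx 2
  have hone : 1 ≤ nsq x / R ^ 2 := (one_le_div (by positivity)).2 hnsq
  calc radial (profile d η) R x ≤ R ^ 2 * (nsq x / R ^ 2 - 1) :=
        mul_le_mul_of_nonneg_left (profile_le_sub_one hη hone) (sq_nonneg R)
    _ = enorm x ^ 2 - R ^ 2 := by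
        rw [enorm_sq]
        field_simp
    _ ≤ (R + 1) ^ 2 - R ^ 2 := by
        gcongr
        exact enorm_nonneg x
    _ = 2 * R + 1 := by ring

lemma le_radial_profile {a : ℝ} (hR : 0 < R) (hηa : η ^ 2 ≤ a) (ha : a ≤ 1)
    (hx : enorm x ≤ a * R) :
    profileGap d a * R ^ 2 ≤ radial (profile d η) R x := by
  rw [radial, mul_comm]
  gcongr
  refine le_profile_of_le_sq hη hηa ha ?_
  rw [div_le_iff₀ (by positivity), ← mul_pow, ← enorm_sq]
  gcongr
  exact enorm_nonneg x

end Comparison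

/-! ### Unit cells and volumes -/

section Cells

variable {d : ℕ}

lemma volume_euclideanSpace_pi (s : Fin d → Set ℝ) :
    volume {z : EuclideanSpace ℝ (Fin d) | ∀ i, z i ∈ s i} = ∏ i, volume (s i) := by
  rw [← volume_pi_pi, ← (EuclideanSpace.volume_preserving_symm_measurableEquiv_toLp
    (Fin d)).measure_preimage_equiv]
  congr 1
  ext z
  simp

/-- The site obtained by rounding each coordinate to the nearest integer; its fibres are half-open
unit cells which tile space. -/
def nearestSite (z : EuclideanSpace ℝ (Fin d)) : Site d := fun i => round (z i)

lemma measurable_nearestSite : Measurable (nearestSite (d := d)) := by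
  refine measurable_pi_iff.2 fun i => ?_
  simp only [nearestSite, round_eq]
  fun_prop

lemma norm_sub_latticePoint_nearestSite_le (z : EuclideanSpace ℝ (Fin d)) :
    ‖z - latticePoint (nearestSite z)‖ ≤ √d := by
  rw [EuclideanSpace.norm_eq]
  refine Real.sqrt_le_sqrt ?_
  have hcoord (i : Fin d) : ‖(z - latticePoint (nearestSite z)) i‖ ^ 2 ≤ 1 :=
    pow_le_one₀ (norm_nonneg _) ((abs_sub_round (z i)).trans (by norm_num))
  simpa using Finset.sum_le_card_nsmul Finset.univ _ 1 fun i _ => hcoord i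

lemma norm_le_enorm_nearestSite_add (z : EuclideanSpace ℝ (Fin d)) :
    ‖z‖ ≤ enorm (nearestSite z) + √d := by
  rw [← norm_latticePoint, add_comm, ← sub_le_iff_le_add]
  exact (norm_sub_norm_le _ _).trans (norm_sub_latticePoint_nearestSite_le z)

lemma enorm_nearestSite_le (z : EuclideanSpace ℝ (Fin d)) :
    enorm (nearestSite z) ≤ ‖z‖ + √d := by
  rw [← norm_latticePoint, add_comm, ← sub_le_iff_le_add]
  exact (norm_sub_norm_le _ _).trans (norm_sub_rev z _ ▸ norm_sub_latticePoint_nearestSite_le z)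

lemma volume_nearestSite_preimage_singleton (x : Site d) :
    volume (nearestSite ⁻¹' {x}) = 1 := by
  have hfibre : nearestSite ⁻¹' {x} = {z : EuclideanSpace ℝ (Fin d) |
      ∀ i, z i ∈ Set.Ico ((x i : ℝ) - 1 / 2) (x i + 1 / 2)} := by
    ext z
    simp only [Set.mem_preimage, Set.mem_singleton_iff, funext_iff, nearestSite, round_eq,
      Int.floor_eq_iff, Set.mem_ofPred_eq, Set.mem_Ico]
    refine forall_congr' fun i => and_congr ?_ ?_ <;> constructor <;> intro h <;> linarith
  rw [hfibre, volume_euclideanSpace_pi]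
  norm_num

lemma volume_nearestSite_preimage (F : Finset (Site d)) :
    volume (nearestSite ⁻¹' (F : Set (Site d))) = F.card := by
  rw [← sum_measure_preimage_singleton F fun x _ =>
    measurable_nearestSite (measurableSet_singleton x)]
  simp [volume_nearestSite_preimage_singleton]

lemma isClosed_box_singleton (x : Site d) : IsClosed (box d {x}) := by
  simp only [box, Set.mem_singleton_iff, exists_eq_left, Set.ofPred_forall]
  exact isClosed_iInter fun i => isClosed_le (by fun_prop) continuous_const

lemma volume_box_singleton (x : Site d) : volume (box d {x}) = 1 := by
  have hcell : box d {x} = {z : EuclideanSpace ℝ (Fin d) |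
      ∀ i, z i ∈ Metric.closedBall (x i : ℝ) (1 / 2)} := by
    simp [box, Real.dist_eq]
  rw [hcell, volume_euclideanSpace_pi]
  simp

lemma box_eq_biUnion (A : Set (Site d)) : box d A = ⋃ x ∈ A, box d {x} := by
  ext z
  simp [box]

lemma nearestSite_preimage_subset_box (A : Set (Site d)) : nearestSite ⁻¹' A ⊆ box d A :=
  fun z hz => ⟨nearestSite z, hz, fun i => abs_sub_round (z i)⟩

lemma measurableSet_box (A : Set (Site d)) : MeasurableSet (box d A) := by
  rw [box_eq_biUnion]
  exact .biUnion A.to_countable fun x _ => (isClosed_box_singleton x).measurableSet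

lemma volume_box_le_card (A : Finset (Site d)) : volume (box d (A : Set (Site d))) ≤ A.card := by
  rw [box_eq_biUnion]
  refine (measure_biUnion_finset_le A _).trans ?_
  simp [volume_box_singleton]

lemma ballVol_pos (d : ℕ) : 0 < ballVol d :=
  ENNReal.toReal_pos (Metric.measure_ball_pos _ _ one_pos).ne' measure_ball_lt_top.ne

lemma volume_real_closedBall {ρ : ℝ} (hρ : 0 ≤ ρ) :
    volume.real (Metric.closedBall (0 : EuclideanSpace ℝ (Fin d)) ρ) = ballVol d * ρ ^ d := by
  rw [Measure.addHaar_real_closedBall _ _ hρ, finrank_euclideanSpace, Fintype.card_fin, mul_comm]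
  rfl

lemma card_le_ballVol_mul {F : Finset (Site d)} {ρ : ℝ} (hρ : 0 ≤ ρ)
    (hF : ∀ x ∈ F, enorm x ≤ ρ) : (F.card : ℝ) ≤ ballVol d * (ρ + √d) ^ d := by
  have hsub : nearestSite ⁻¹' (F : Set (Site d)) ⊆ Metric.closedBall 0 (ρ + √d) := fun z hz =>
    mem_closedBall_zero_iff.2 <| (norm_le_enorm_nearestSite_add z).trans (by gcongr; exact hF _ hz)
  have hvol := measureReal_mono (μ := volume) hsub measure_closedBall_lt_top.ne
  rwa [volume_real_closedBall (by positivity), measureReal_def, volume_nearestSite_preimage,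
    ENNReal.toReal_natCast] at hvol

lemma finite_setOf_enorm_le (d : ℕ) (ρ : ℝ) : {x : Site d | enorm x ≤ ρ}.Finite := by
  refine (Set.Finite.pi' fun _ => Set.finite_Icc (-⌊ρ⌋) ⌊ρ⌋).subset fun x hx i => ?_
  have habs : |x i| ≤ ⌊ρ⌋ := Int.le_floor.2 <| by
    simpa using (abs_apply_le_enorm x i).trans hx
  exact abs_le.1 habs

/-- The sites at distance less than `ρ` from the origin. -/
def latticeBall (d : ℕ) (ρ : ℝ) : Finset (Site d) :=
  ((finite_setOf_enorm_le d ρ).subset fun _ hx => (Set.mem_ofPred_eq ▸ hx).le :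
    {x : Site d | enorm x < ρ}.Finite).toFinset

/-- The sites at distance between `ρ₁` and `ρ₂` from the origin, both included. -/
def latticeAnnulus (d : ℕ) (ρ₁ ρ₂ : ℝ) : Finset (Site d) :=
  ((finite_setOf_enorm_le d ρ₂).subset fun _ hx => hx.2 :
    {x : Site d | ρ₁ ≤ enorm x ∧ enorm x ≤ ρ₂}.Finite).toFinset

@[simp] lemma mem_latticeBall {ρ : ℝ} {x : Site d} : x ∈ latticeBall d ρ ↔ enorm x < ρ := by
  simp [latticeBall]

@[simp] lemma mem_latticeAnnulus {ρ₁ ρ₂ : ℝ} {x : Site d} :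
    x ∈ latticeAnnulus d ρ₁ ρ₂ ↔ ρ₁ ≤ enorm x ∧ enorm x ≤ ρ₂ := by
  simp [latticeAnnulus]

lemma card_latticeBall_le {ρ : ℝ} (hρ : 0 ≤ ρ) :
    ((latticeBall d ρ).card : ℝ) ≤ ballVol d * (ρ + √d) ^ d :=
  card_le_ballVol_mul hρ fun _ hx => (mem_latticeBall.1 hx).le

lemma closedBall_diff_box_subset (A : Finset (Site d)) (ρ₁ ρ₂ R : ℝ) :
    Metric.closedBall 0 R \ box d (A : Set (Site d)) ⊆
      nearestSite ⁻¹' (latticeAnnulus d ρ₁ ρ₂ \ A : Finset (Site d)) ∪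
        Metric.closedBall 0 (ρ₁ + √d) ∪
        (Metric.closedBall 0 R \ Metric.closedBall 0 (ρ₂ - √d)) := by
  rintro z ⟨hzR, hzA⟩
  have hxA : nearestSite z ∉ A := fun h => hzA (nearestSite_preimage_subset_box _ h)
  rcases lt_or_ge (enorm (nearestSite z)) ρ₁ with hlt | hge
  · refine .inl (.inr (mem_closedBall_zero_iff.2 ?_))
    linarith [norm_le_enorm_nearestSite_add z]
  rcases le_or_gt (enorm (nearestSite z)) ρ₂ with hle | hgt
  · exact .inl (.inl (by simp [hge, hle, hxA]))
  · refine .inr ⟨hzR, fun hz => ?_⟩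
    linarith [enorm_nearestSite_le z, mem_closedBall_zero_iff.1 hz]

lemma volume_real_closedBall_diff_box_le (A : Finset (Site d)) {ρ₁ ρ₂ R : ℝ} (hρ₁ : 0 ≤ ρ₁)
    (hρ₂ : √d ≤ ρ₂) (hR : ρ₂ - √d ≤ R) :
    volume.real (Metric.closedBall 0 R \ box d (A : Set (Site d))) ≤
      (latticeAnnulus d ρ₁ ρ₂ \ A).card + ballVol d * (ρ₁ + √d) ^ d +
        (ballVol d * R ^ d - ballVol d * (ρ₂ - √d) ^ d) := by
  have hr : 0 ≤ ρ₂ - √d := sub_nonneg.2 hρ₂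
  set H := latticeAnnulus d ρ₁ ρ₂ \ A
  have hH_top : volume (nearestSite ⁻¹' (H : Set (Site d))) ≠ ⊤ := by
    simp [volume_nearestSite_preimage]
  have hball_top (ρ : ℝ) : volume (Metric.closedBall (0 : EuclideanSpace ℝ (Fin d)) ρ) ≠ ⊤ :=
    measure_closedBall_lt_top.ne
  calc _ ≤ volume.real (nearestSite ⁻¹' (H : Set (Site d)) ∪ Metric.closedBall 0 (ρ₁ + √d) ∪
          (Metric.closedBall 0 R \ Metric.closedBall 0 (ρ₂ - √d))) :=
      measureReal_mono (closedBall_diff_box_subset A ρ₁ ρ₂ R) <|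
        measure_union_ne_top (measure_union_ne_top hH_top (hball_top _))
          (measure_ne_top_of_subset Set.sdiff_subset (hball_top R))
    _ ≤ _ := (measureReal_union_le _ _).trans
      (add_le_add_left (measureReal_union_le _ _) _)
    _ = _ := by
      rw [measureReal_sdiff (Metric.closedBall_subset_closedBall hR)
          Metric.isClosed_closedBall.measurableSet (hball_top R), volume_real_closedBall hr,
        volume_real_closedBall (hr.trans hR), volume_real_closedBall (by positivity),
        measureReal_def, volume_nearestSite_preimage, ENNReal.toReal_natCast]

end Cells

lemma measureReal_symmDiff_le_two_mul {α : Type*} [MeasurableSpace α] {μ : Measure α} {s t : Set α}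
    (hs : MeasurableSet s) (ht : MeasurableSet t) (ht_top : μ t ≠ ⊤) (hst : μ s ≤ μ t) :
    μ.real (s ∆ t) ≤ 2 * μ.real (t \ s) := by
  have hs_top : μ s ≠ ⊤ := ne_top_of_le_ne_top ht_top hst
  have hreal : μ.real s ≤ μ.real t := ENNReal.toReal_mono ht_top hst
  have hs_split := measureReal_sdiff_add_inter (s := s) ht hs_top
  have ht_split := measureReal_sdiff_add_inter (s := t) hs ht_top
  rw [Set.inter_comm] at ht_split
  rw [measureReal_symmDiff_eq hs ht hs_top ht_top]
  linarith

lemma volume_real_smul_symmDiff_unitVolBall {d n : ℕ} (hd : d ≠ 0) (hn : n ≠ 0)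
    (X : Set (EuclideanSpace ℝ (Fin d))) :
    volume.real (((n : ℝ) ^ (-(1 : ℝ) / d) • X) ∆ unitVolBall d) =
      volume.real (X ∆ Metric.closedBall 0 ((n / ballVol d) ^ (1 / d : ℝ))) / n := by
  have hω := ballVol_pos d
  set t := (n : ℝ) ^ (-(1 : ℝ) / d) with ht
  have ht_pos : 0 < t := by positivity
  have hball : unitVolBall d = t • Metric.closedBall 0 ((n / ballVol d) ^ (1 / d : ℝ)) := by
    rw [smul_closedBall _ _ (by positivity), smul_zero, Real.norm_of_nonneg ht_pos.le, unitVolBall,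
      Real.div_rpow n.cast_nonneg hω.le, ht, neg_div, Real.rpow_neg n.cast_nonneg,
      Real.rpow_neg hω.le]
    congr 1
    field_simp
  have ht_pow : t ^ d = (n : ℝ)⁻¹ := by
    rw [ht, ← Real.rpow_mul_natCast n.cast_nonneg, div_mul_cancel₀ _ (by positivity),
      Real.rpow_neg_one]
  rw [hball, ← Set.smul_set_symmDiff₀ ht_pos.ne', measureReal_def, Measure.addHaar_smul_of_nonneg _
    ht_pos.le, finrank_euclideanSpace, Fintype.card_fin, ht_pow, ENNReal.toReal_mul,
    ENNReal.toReal_ofReal (by positivity), ← measureReal_def, inv_mul_eq_div]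

/-! ### The Green potential of a set of sites -/

/-- `f` is the Green potential of `H` in the lattice ball of radius `R`: the total mass of the
Green function of that ball, with Dirichlet boundary condition, over the poles in `H`. -/
structure IsGreenPotential {d : ℕ} (R : ℝ) (H : Finset (Site d)) (f : Site d → ℝ) : Prop where
  eq_zero : ∀ x, R ≤ enorm x → f x = 0
  lap_eq : ∀ x, enorm x < R → lap f x = if x ∈ H then -1 else 0

lemma exists_isGreenPotential {d : ℕ} [NeZero d] (R : ℝ) (H : Finset (Site d)) :
    ∃ f, IsGreenPotential R H f := by
  obtain ⟨f, hzero, hlap⟩ := exists_lap_eq (latticeBall d R) fun x => if x ∈ H then -1 else 0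
  exact ⟨f, fun x hx => hzero x (by simpa using hx), fun x hx => hlap x (by simpa using hx)⟩

lemma lap_sub_const {d : ℕ} (f : Site d → ℝ) (c : ℝ) : lap (fun x => f x - c) = lap f := by
  ext x
  simp [lap_apply]

namespace IsGreenPotential

variable {d : ℕ} {R : ℝ} {H : Finset (Site d)} {f : Site d → ℝ} (hf : IsGreenPotential R H f)
include hf

lemma eq_zero_of_notMem : ∀ x ∉ latticeBall d R, f x = 0 :=
  fun x hx => hf.eq_zero x (by simpa using hx)

section Bounds

variable [NeZero d]

lemma nonneg (x : Site d) : 0 ≤ f x := by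
  by_cases hx : x ∈ latticeBall d R
  · refine nonneg_of_lap_nonpos (fun y hy _ => ?_)
      (fun _ _ _ e he => (hf.eq_zero_of_notMem _ he).ge) x hx
    rw [hf.lap_eq y (mem_latticeBall.1 hy)]
    split_ifs <;> norm_num
  · exact (hf.eq_zero_of_notMem x hx).ge

lemma lap_nonneg {x : Site d} (hx : x ∉ H) : 0 ≤ lap f x := by
  rcases lt_or_ge (enorm x) R with hxR | hxR
  · simp [hf.lap_eq x hxR, hx]
  · rw [lap_apply, hf.eq_zero x hxR]
    exact Finset.sum_nonneg fun e _ => by simpa using hf.nonneg _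

-- Compare with `((R + 1)² - |x|²) / 2d`, whose Laplacian is `-1`.
lemma le_add_one_sq (hR : 0 ≤ R) (x : Site d) : f x ≤ (R + 1) ^ 2 := by
  by_cases hx : x ∈ latticeBall d R
  · have hd : (1 : ℝ) ≤ 2 * d := by exact_mod_cast (by have := NeZero.pos d; omega : 1 ≤ 2 * d)
    let g : Site d → ℝ := fun x =>
      (-(2 * d : ℝ)⁻¹ • (nsq : Site d → ℝ) - f) x - -((R + 1) ^ 2 / (2 * d))
    have hg (y : Site d) : g y = ((R + 1) ^ 2 - nsq y) / (2 * d) - f y := by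
      simp only [g, Pi.sub_apply, Pi.smul_apply, smul_eq_mul]
      ring
    have hlap (y : Site d) : lap g y = -1 - lap f y := by
      refine (congr_fun (lap_sub_const _ _) y).trans ?_
      simp only [map_sub, map_smul, Pi.sub_apply, Pi.smul_apply, lap_nsq, smul_eq_mul]
      rw [neg_mul, inv_mul_cancel₀ (by positivity)]
    have hg_nonneg : 0 ≤ g x := by
      refine nonneg_of_lap_nonpos (fun y hy _ => ?_) (fun y hy _ e he => ?_) x hx
      · rw [hlap, hf.lap_eq y (mem_latticeBall.1 hy)]
        split_ifs <;> norm_num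
      · rw [hg, hf.eq_zero_of_notMem _ he, sub_zero, ← enorm_sq]
        have hye : enorm (y + dirVec d e) ≤ R + 1 := by
          linarith [enorm_add_dirVec_le y e, mem_latticeBall.1 hy]
        have := pow_le_pow_left₀ (enorm_nonneg _) hye 2
        exact div_nonneg (by linarith) (by positivity)
    calc f x ≤ ((R + 1) ^ 2 - nsq x) / (2 * d) := by linarith [hg x]
      _ ≤ ((R + 1) ^ 2) / (2 * d) := by
          gcongr
          linarith [nsq_nonneg x]
      _ ≤ (R + 1) ^ 2 := div_le_self (by positivity) hd
  · rw [hf.eq_zero_of_notMem x hx]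
    positivity

lemma sum_le_sum_latticeBall (A : Finset (Site d)) :
    ∑ x ∈ A, f x ≤ ∑ x ∈ latticeBall d R, f x := by
  rw [← Finset.sum_inter_add_sum_sdiff A (latticeBall d R), Finset.sum_eq_zero fun x hx =>
    hf.eq_zero_of_notMem x (Finset.mem_sdiff.1 hx).2, add_zero]
  exact Finset.sum_le_sum_of_subset_of_nonneg Finset.inter_subset_right fun x _ _ => hf.nonneg x

lemma sum_latticeBall_le (hR : 0 ≤ R) :
    ∑ x ∈ latticeBall d R, f x ≤ (latticeBall d R).card * (R + 1) ^ 2 := by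
  simpa using Finset.sum_le_card_nsmul _ f _ fun x _ => hf.le_add_one_sq hR x

lemma neg_tsum_mul_lap_le : -∑' x, f x * lap f x ≤ ∑ x ∈ latticeBall d R, f x := by
  rw [tsum_eq_sum (s := latticeBall d R) fun x hx => by rw [hf.eq_zero_of_notMem x hx, zero_mul],
    ← Finset.sum_neg_distrib]
  refine Finset.sum_le_sum fun x hx => ?_
  rw [hf.lap_eq x (mem_latticeBall.1 hx)]
  split_ifs <;> linarith [hf.nonneg x]

lemma sum_gradNorm_le (hR : 0 ≤ R) (A : Finset (Site d)) :
    ∑ x ∈ A, gradNorm f x ≤ 4 * d * (latticeBall d R).card * (R + 1) := by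
  have hd : (1 : ℝ) ≤ d := by exact_mod_cast NeZero.one_le
  refine le_of_sq_le_sq ?_ (by positivity)
  set N : ℝ := ((latticeBall d R).card : ℝ)
  calc (∑ x ∈ A, gradNorm f x) ^ 2 ≤ 4 * d * N * (2 * -∑' x, f x * lap f x) :=
        (sum_gradNorm_sq_le hf.eq_zero_of_notMem A).trans_eq (by ring)
    _ ≤ 4 * d * N * (2 * (N * (R + 1) ^ 2)) := by
        gcongr
        exact hf.neg_tsum_mul_lap_le.trans (hf.sum_latticeBall_le hR)
    _ = 8 * d * (N * (R + 1)) ^ 2 := by ring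
    _ ≤ 16 * d ^ 2 * (N * (R + 1)) ^ 2 := by
        gcongr ?_ * _
        nlinarith
    _ = (4 * d * N * (R + 1)) ^ 2 := by ring

theorem card_mul_apply_zero_le {D : ℝ} {A : Finset (Site d)} (hD : 0 ≤ D) (hR : 0 ≤ R)
    (hA : IsApproxQuadratureDomain D A) (hAH : Disjoint A H) :
    A.card * f 0 ≤
      ∑ x ∈ latticeBall d R, f x + D * (4 * d * (latticeBall d R).card * (R + 1)) :=
  calc A.card * f 0 ≤ ∑ x ∈ A, f x + D * ∑ x ∈ A, gradNorm f x :=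
        hA f fun _ hx => hf.lap_nonneg (Finset.disjoint_left.1 hAH hx)
    _ ≤ _ := add_le_add (hf.sum_le_sum_latticeBall A)
        (mul_le_mul_of_nonneg_left (hf.sum_gradNorm_le hR A) hD)

theorem apply_le_apply_zero_add {k ℓ ρ : ℝ} {y : Site d} (hρ : ∀ x ∈ H, ρ ≤ enorm x)
    (hρR : ρ ≤ R) (hR : 0 ≤ R) (hℓ : 1 ≤ ℓ) (hkℓ : k ≤ ℓ) (hkℓρ : d * (k + ℓ) < ρ)
    (hy : enorm y ≤ k) :
    f y ≤ f 0 + d * ((R + 1) ^ 2 * (d * (k + 1) / ℓ)) := by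
  refine sub_le_iff_le_add'.1 ((le_abs_self _).trans (abs_sub_apply_zero_le hℓ hkℓ
    (fun x => ⟨hf.nonneg x, hf.le_add_one_sq hR x⟩) (fun x hx => ?_)
    fun j => (abs_apply_le_enorm y j).trans hy))
  have hxρ : enorm x < ρ := (enorm_le_mul_of_abs_apply_le hx).trans_lt hkℓρ
  rw [hf.lap_eq x (hxρ.trans_le hρR), if_neg fun h => (hρ x h).not_gt hxρ]

-- Summing by parts against `w - M`: off the ball, `Δf` is nonnegative and lives within distance `1`
-- of the ball, where `w - M ≤ 0`.
theorem card_mul_le_neg_sum_mul_lap {w : Site d → ℝ} {β M : ℝ} (hH : H ⊆ latticeBall d R)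
    (hM : ∀ x, R ≤ enorm x → enorm x ≤ R + 1 → w x ≤ M) (hβ : ∀ x ∈ H, β ≤ w x) :
    H.card * (β - M) ≤ -∑ x ∈ latticeBall d R, f x * lap w x := by
  have hparts : ∑ x ∈ latticeBall d R, f x * lap w x = ∑' x, (w x - M) * lap f x := by
    rw [← tsum_mul_lap_comm hf.eq_zero_of_notMem fun x => w x - M, lap_sub_const,
      tsum_eq_sum fun x hx => by rw [hf.eq_zero_of_notMem x hx, zero_mul]]
  have hoff (x : Site d) (hx : R ≤ enorm x) : (w x - M) * lap f x ≤ 0 := by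
    have hxH : x ∉ H := fun h => (mem_latticeBall.1 (hH h)).not_ge hx
    rcases le_or_gt (enorm x) (R + 1) with hx' | hx'
    · exact mul_nonpos_of_nonpos_of_nonneg (by linarith [hM x hx hx']) (hf.lap_nonneg hxH)
    · rw [lap_apply, Finset.sum_eq_zero fun e _ => ?_, mul_zero]
      rw [hf.eq_zero x hx, hf.eq_zero _ (by linarith [enorm_le_enorm_add_dirVec x e]), sub_zero]
  have hle (x : Site d) : (w x - M) * lap f x ≤ if x ∈ H then -(β - M) else 0 := by
    rcases lt_or_ge (enorm x) R with hx | hx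
    · rw [hf.lap_eq x hx]
      split_ifs with hxH
      · linarith [hβ x hxH]
      · rw [mul_zero]
    · rw [if_neg fun h => (mem_latticeBall.1 (hH h)).not_ge hx]
      exact hoff x hx
  have hsum := (hasSum_mul_lap (u := fun x => w x - M)
    (summable_mul_translate_of_eq_zero_right hf.eq_zero_of_notMem)).summable.tsum_le_tsum hle
    (summable_of_ne_finset_zero (s := H) fun x hx => if_neg hx)
  rw [tsum_eq_sum (s := H) fun x hx => if_neg hx, Finset.sum_ite_mem, Finset.inter_self,
    Finset.sum_const, nsmul_eq_mul, ← hparts] at hsum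
  linarith

theorem card_mul_le_of_profile {η a : ℝ} (hη : 0 < η) (hηa : η ^ 2 ≤ a) (ha : a < 1) (hR : 1 ≤ R)
    (hH : ∀ x ∈ H, enorm x ≤ a * R) :
    H.card * (profileGap d a * R ^ 2 - (2 * R + 1)) ≤
      2 * d * ((η ^ d)⁻¹ * ∑ x ∈ latticeBall d (η * R + 1), f x -
        (1 - 27 * profileTaylorConst d η / R) * ∑ x ∈ latticeBall d R, f x) := by
  have hR_pos : 0 < R := by linarith
  set I := latticeBall d (η * R + 1)
  set q := 27 * profileTaylorConst d η / R with hq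
  have hq_nonneg : 0 ≤ q := div_nonneg (mul_nonneg (by norm_num) (profileTaylorConst_nonneg d η))
    hR_pos.le
  have hpoint (x : Site d) (hx : x ∈ latticeBall d R) :
      -(f x * lap (radial (profile d η) R) x) ≤
        2 * d * ((η ^ d)⁻¹ * (if x ∈ I then f x else 0) - (1 - q) * f x) := by
    have hfx := hf.nonneg x
    split_ifs with hxI
    · have hnear := mul_le_mul_of_nonneg_left (le_lap_radial_profile (x := x) hη hR_pos) hfx
      have : 0 ≤ 2 * d * (q * f x) := by positivity
      linarith
    · have hfar := mul_le_mul_of_nonneg_left (le_lap_radial_profile_of_far hη hR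
        (by simpa [I] using hxI) (mem_latticeBall.1 hx).le) hfx
      rw [← hq] at hfar
      linarith
  have hI : ∑ x ∈ latticeBall d R, (if x ∈ I then f x else 0) ≤ ∑ x ∈ I, f x := by
    rw [Finset.sum_ite_mem]
    exact Finset.sum_le_sum_of_subset_of_nonneg Finset.inter_subset_right fun x _ _ => hf.nonneg x
  calc _ ≤ -∑ x ∈ latticeBall d R, f x * lap (radial (profile d η) R) x :=
        hf.card_mul_le_neg_sum_mul_lap
          (fun x hx => mem_latticeBall.2 ((hH x hx).trans_lt (by nlinarith)))
          (fun x => radial_profile_le hη hR_pos)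
          fun x hx => le_radial_profile hη hR_pos hηa ha.le (hH x hx)
    _ ≤ 2 * d * ((η ^ d)⁻¹ * ∑ x ∈ latticeBall d R, (if x ∈ I then f x else 0) -
          (1 - q) * ∑ x ∈ latticeBall d R, f x) := by
        rw [← Finset.sum_neg_distrib, Finset.mul_sum, Finset.mul_sum, ← Finset.sum_sub_distrib,
          Finset.mul_sum]
        exact Finset.sum_le_sum hpoint
    _ ≤ _ := by gcongr

end Bounds

end IsGreenPotential

/-! ### Filling the ball -/

section Annulus

variable {d : ℕ} {D η ε a R : ℝ}

lemma card_latticeBall_le_mul (hR : 0 < R) :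
    ((latticeBall d R).card : ℝ) ≤ ballVol d * R ^ d * (1 + √d * R⁻¹) ^ d := by
  refine (card_latticeBall_le hR.le).trans_eq ?_
  rw [mul_assoc, ← mul_pow]
  field_simp

lemma inv_pow_mul_card_latticeBall_le_mul (hη : 0 < η) (hR : 0 < R) :
    (η ^ d)⁻¹ * (latticeBall d (η * R + 1)).card ≤
      ballVol d * R ^ d * (1 + (1 + √d) / η * R⁻¹) ^ d := by
  rw [inv_mul_le_iff₀ (by positivity)]
  refine (card_latticeBall_le (by positivity)).trans_eq ?_
  rw [mul_assoc, mul_left_comm, ← mul_pow, ← mul_pow]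
  congr 2
  field_simp
  ring

/-- The relative oscillation, for the scale `u = R⁻¹`, of Green potentials with poles at distance
at least `ε * R` over the ball of radius about `η * R`. -/
def greenOscillation (d : ℕ) (η ε u : ℝ) : ℝ := 4 * d ^ 3 * (1 + u) ^ 2 * (η + 2 * u) / ε

/-- The error, for the scale `u = R⁻¹`, in the bound for the relative number of unoccupied sites
in an annulus. Its four terms come from counting the sites of a small ball, from the oscillation of
the Green potential there, from the discrepancy, and from the Taylor expansion of the profile. -/
def annulusError (d : ℕ) (D η ε u : ℝ) : ℝ :=
  2 * d * (((1 + (1 + √d) / η * u) ^ d - 1) * (1 + u) ^ 2 +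
    (1 + (1 + √d) / η * u) ^ d * greenOscillation d η ε u +
    D * (4 * d * (1 + √d * u) ^ d * (1 + u) * u) +
    27 * profileTaylorConst d η * (1 + √d * u) ^ d * (1 + u) ^ 2 * u)

lemma continuous_annulusError (d : ℕ) (D η ε : ℝ) : Continuous (annulusError d D η ε) := by
  unfold annulusError greenOscillation
  fun_prop

lemma annulusError_zero (d : ℕ) (D η ε : ℝ) :
    annulusError d D η ε 0 = 8 * d ^ 4 * η / ε := by
  simp only [annulusError, greenOscillation, mul_zero, add_zero, one_pow, sub_self, mul_one,
    zero_add, one_mul]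
  ring

variable [NeZero d] {A H : Finset (Site d)} {f : Site d → ℝ}

lemma IsGreenPotential.apply_le_apply_zero_add_greenOscillation (hf : IsGreenPotential R H f)
    (hη : 0 < η) (hηε : 8 * d * η ≤ ε) (hε : ε ≤ 1) (hηR : 1 ≤ η * R)
    (hH : ∀ x ∈ H, ε * R ≤ enorm x) {y : Site d} (hy : enorm y ≤ η * R + 1) :
    f y ≤ f 0 + R ^ 2 * greenOscillation d η ε R⁻¹ := by
  have hd : (1 : ℝ) ≤ d := by exact_mod_cast NeZero.one_le
  have hR : 0 < R := pos_of_mul_pos_right (by linarith) hη.le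
  have hε_pos : 0 < ε := lt_of_lt_of_le (by positivity) hηε
  have hℓ : 2 * (η * R) ≤ ε * R / (4 * d) := by
    rw [le_div_iff₀ (by positivity)]
    linarith [mul_le_mul_of_nonneg_right hηε hR.le]
  have hkℓρ : d * (η * R + 1 + ε * R / (4 * d)) < ε * R := by
    have : d * (ε * R / (4 * d)) = ε * R / 4 := by field_simp
    nlinarith [mul_pos hε_pos hR]
  convert hf.apply_le_apply_zero_add hH (mul_le_of_le_one_left hR.le hε) hR.le
    (by linarith) (by linarith) hkℓρ hy using 2
  rw [greenOscillation]
  field_simp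
  ring

lemma IsGreenPotential.inv_pow_mul_sum_le (hf : IsGreenPotential R H f)
    (hη : 0 < η) (hηε : 8 * d * η ≤ ε) (hε : ε ≤ 1) (hηR : 1 ≤ η * R)
    (hH : ∀ x ∈ H, ε * R ≤ enorm x) :
    (η ^ d)⁻¹ * ∑ x ∈ latticeBall d (η * R + 1), f x ≤
      ballVol d * R ^ d * (1 + (1 + √d) / η * R⁻¹) ^ d *
        (f 0 + R ^ 2 * greenOscillation d η ε R⁻¹) := by
  have hR : 0 < R := pos_of_mul_pos_right (by linarith) hη.le
  have hbound_nonneg : 0 ≤ f 0 + R ^ 2 * greenOscillation d η ε R⁻¹ :=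
    (hf.nonneg 0).trans <| hf.apply_le_apply_zero_add_greenOscillation hη hηε hε hηR hH
      (by rw [enorm, nsq_zero, Real.sqrt_zero]; positivity)
  have hsum := Finset.sum_le_card_nsmul (latticeBall d (η * R + 1)) f _ fun y hy =>
    hf.apply_le_apply_zero_add_greenOscillation hη hηε hε hηR hH (mem_latticeBall.1 hy).le
  rw [nsmul_eq_mul] at hsum
  calc _ ≤ (η ^ d)⁻¹ * ((latticeBall d (η * R + 1)).card *
          (f 0 + R ^ 2 * greenOscillation d η ε R⁻¹)) := by gcongr
    _ ≤ _ := by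
        rw [← mul_assoc]
        exact mul_le_mul_of_nonneg_right (inv_pow_mul_card_latticeBall_le_mul hη hR) hbound_nonneg

theorem card_annulus_sdiff_mul_le (hA : IsApproxQuadratureDomain D A) (hD : 0 ≤ D) (hη : 0 < η)
    (hηε : 8 * d * η ≤ ε) (hε : ε ≤ 1) (hηa : η ^ 2 ≤ a) (ha : a < 1) (hR : 1 ≤ R)
    (hηR : 1 ≤ η * R) (hcard : ballVol d * R ^ d = A.card) :
    (latticeAnnulus d (ε * R) (a * R) \ A).card * (profileGap d a - 2 * R⁻¹ - R⁻¹ ^ 2) ≤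
      A.card * annulusError d D η ε R⁻¹ := by
  have hR_pos : 0 < R := by linarith
  set H := latticeAnnulus d (ε * R) (a * R) \ A
  have hHannulus (x : Site d) (hx : x ∈ H) : ε * R ≤ enorm x ∧ enorm x ≤ a * R :=
    mem_latticeAnnulus.1 (Finset.mem_sdiff.1 hx).1
  obtain ⟨f, hf⟩ := exists_isGreenPotential R H
  have hnear := hf.inv_pow_mul_sum_le hη hηε hε hηR fun x hx => (hHannulus x hx).1
  have hcompare := hf.card_mul_le_of_profile hη hηa ha hR fun x hx => (hHannulus x hx).2
  have hmean := hf.card_mul_apply_zero_le hD hR_pos.le hA Finset.disjoint_sdiff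
  have hsum := hf.sum_latticeBall_le hR_pos.le
  have hzero := hf.le_add_one_sq hR_pos.le 0
  have hball := card_latticeBall_le_mul (d := d) hR_pos
  rw [hcard] at hnear hball
  set N := ((latticeBall d R).card : ℝ)
  set S := ∑ x ∈ latticeBall d R, f x
  set P := (1 + (1 + √d) / η * R⁻¹) ^ d with hP
  set Q := (1 + √d * R⁻¹) ^ d with hQ
  set C := profileTaylorConst d η with hC
  have hC_nonneg : 0 ≤ C := profileTaylorConst_nonneg d η
  have hP_ge : 1 ≤ P := one_le_pow₀ (le_add_of_nonneg_right (by positivity))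
  refine le_of_mul_le_mul_right ?_ (pow_pos hR_pos 2)
  calc _ = H.card * (profileGap d a * R ^ 2 - (2 * R + 1)) := by field_simp; ring
    _ ≤ 2 * d * (A.card * P * (f 0 + R ^ 2 * greenOscillation d η ε R⁻¹) -
          (1 - 27 * C / R) * S) := hcompare.trans (by gcongr)
    _ ≤ 2 * d * (A.card * ((P - 1) * f 0 + P * (R ^ 2 * greenOscillation d η ε R⁻¹)) +
          D * (4 * d * N * (R + 1)) + 27 * C / R * S) := by
        gcongr 2 * d * ?_
        linarith
    _ ≤ 2 * d * (A.card * ((P - 1) * (R + 1) ^ 2 + P * (R ^ 2 * greenOscillation d η ε R⁻¹)) +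
          D * (4 * d * (A.card * Q) * (R + 1)) + 27 * C / R * (A.card * Q * (R + 1) ^ 2)) := by
        have hP_sub : 0 ≤ P - 1 := sub_nonneg.2 hP_ge
        have := hsum.trans (mul_le_mul_of_nonneg_right hball (by positivity))
        gcongr
    _ = _ := by
        rw [annulusError, ← hP, ← hQ, ← hC]
        field_simp

end Annulus

section Asymptotics

variable {d : ℕ} {D : ℝ}

lemma volume_real_closedBall_diff_box_le_of_sqrt_le (A : Finset (Site d)) {ε R : ℝ}
    (hR : 0 ≤ R) (hε : ε ≤ 1 / 2) (hεR : √d ≤ ε * R) :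
    volume.real (Metric.closedBall 0 R \ box d (A : Set (Site d))) ≤
      (latticeAnnulus d (ε * R) ((1 - ε) * R) \ A).card +
        ballVol d * R ^ d * ((2 * ε) ^ d + (1 - (1 - 2 * ε) ^ d)) := by
  have hω := ballVol_pos d
  have hsqrt : 0 ≤ √(d : ℝ) := Real.sqrt_nonneg _
  have hεR_nonneg : 0 ≤ ε * R := hsqrt.trans hεR
  have hinner : (ε * R + √d) ^ d ≤ R ^ d * (2 * ε) ^ d := by
    rw [← mul_pow]
    gcongr
    linarith
  have houter : R ^ d * (1 - 2 * ε) ^ d ≤ ((1 - ε) * R - √d) ^ d := by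
    rw [← mul_pow]
    exact pow_le_pow_left₀ (mul_nonneg hR (by linarith)) (by linarith) d
  refine (volume_real_closedBall_diff_box_le A hεR_nonneg (ρ₂ := (1 - ε) * R) (by nlinarith)
    (by linarith)).trans ?_
  linarith [mul_le_mul_of_nonneg_left hinner hω.le, mul_le_mul_of_nonneg_left houter hω.le]

variable [NeZero d]

theorem eventually_card_annulus_sdiff_le (hD : 0 ≤ D) {ε a κ : ℝ} (hε : 0 < ε) (hε_le : ε ≤ 1)
    (ha : 0 < a) (ha_lt : a < 1) (hκ : 0 < κ) :
    ∀ᶠ R in atTop, ∀ A : Finset (Site d), IsApproxQuadratureDomain D A →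
      ballVol d * R ^ d = A.card →
      ((latticeAnnulus d (ε * R) (a * R) \ A).card : ℝ) ≤ κ * A.card := by
  have hgap : 0 < profileGap d a := profileGap_pos d ha ha_lt
  obtain ⟨η, ⟨hηε, hηa, hη_error⟩, hη⟩ : ∃ η : ℝ,
      (8 * d * η < ε ∧ η ^ 2 < a ∧ 8 * d ^ 4 * η / ε < κ * profileGap d a) ∧ 0 < η := by
    have hscale : Continuous fun η : ℝ => 8 * d * η := by fun_prop
    have hsq : Continuous fun η : ℝ => η ^ 2 := by fun_prop
    have herror : Continuous fun η : ℝ => 8 * d ^ 4 * η / ε := by fun_prop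
    have hsmall := ((hscale.tendsto' 0 0 (by simp)).eventually_lt_const hε).and <|
      ((hsq.tendsto' 0 0 (by simp)).eventually_lt_const ha).and <|
      (herror.tendsto' 0 0 (by simp)).eventually_lt_const (mul_pos hκ hgap)
    exact ((hsmall.filter_mono nhdsWithin_le_nhds).and self_mem_nhdsWithin).exists
      (f := nhdsWithin 0 (Set.Ioi 0))
  have hgap_cont : Continuous fun u : ℝ => profileGap d a - 2 * u - u ^ 2 := by fun_prop
  have herror_lt : ∀ᶠ u in nhds (0 : ℝ),
      annulusError d D η ε u < κ * (profileGap d a - 2 * u - u ^ 2) :=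
    (continuous_annulusError d D η ε).continuousAt.eventually_lt
      (hgap_cont.const_mul κ).continuousAt (by simpa [annulusError_zero] using hη_error)
  have hgap_pos : ∀ᶠ u in nhds (0 : ℝ), 0 < profileGap d a - 2 * u - u ^ 2 :=
    (hgap_cont.tendsto 0).eventually_const_lt (by simpa using hgap)
  filter_upwards [tendsto_inv_atTop_zero.eventually (herror_lt.and hgap_pos),
    eventually_ge_atTop 1, (tendsto_id.const_mul_atTop hη).eventually_ge_atTop 1]
    with R ⟨herror, hpos⟩ hR hηR A hA hcard
  refine le_of_mul_le_mul_right ?_ hpos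
  calc _ ≤ A.card * annulusError d D η ε R⁻¹ :=
        card_annulus_sdiff_mul_le hA hD hη hηε.le hε_le hηa.le ha_lt hR hηR hcard
    _ ≤ A.card * (κ * (profileGap d a - 2 * R⁻¹ - R⁻¹ ^ 2)) := by gcongr
    _ = _ := by ring

theorem eventually_volume_real_box_symmDiff_closedBall_le (hD : 0 ≤ D) {δ : ℝ} (hδ : 0 < δ) :
    ∀ᶠ R in atTop, ∀ A : Finset (Site d), IsApproxQuadratureDomain D A →
      ballVol d * R ^ d = A.card →
      volume.real (box d (A : Set (Site d)) ∆ Metric.closedBall 0 R) ≤ δ * A.card := by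
  obtain ⟨ε, ⟨hε_lt, hεδ⟩, hε⟩ : ∃ ε : ℝ,
      (ε < 1 / 2 ∧ (2 * ε) ^ d + (1 - (1 - 2 * ε) ^ d) < δ / 4) ∧ 0 < ε := by
    have hcont : Continuous fun ε : ℝ => (2 * ε) ^ d + (1 - (1 - 2 * ε) ^ d) := by fun_prop
    have hsmall := (eventually_lt_nhds (by norm_num : (0 : ℝ) < 1 / 2)).and <|
      (hcont.tendsto' 0 0 (by simp [NeZero.ne d])).eventually_lt_const (by positivity : 0 < δ / 4)
    exact ((hsmall.filter_mono nhdsWithin_le_nhds).and self_mem_nhdsWithin).exists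
      (f := nhdsWithin 0 (Set.Ioi 0))
  filter_upwards [eventually_card_annulus_sdiff_le (d := d) hD hε (a := 1 - ε) (κ := δ / 4)
    (by linarith) (by linarith) (by linarith) (by linarith), eventually_ge_atTop 0,
    (tendsto_id.const_mul_atTop hε).eventually_ge_atTop √d] with R hannulus hR hRd A hA hcard
  have hvolume : volume (box d (A : Set (Site d))) ≤
      volume (Metric.closedBall (0 : EuclideanSpace ℝ (Fin d)) R) := by
    rw [← ENNReal.ofReal_toReal measure_closedBall_lt_top.ne, ← measureReal_def,
      volume_real_closedBall hR, hcard, ENNReal.ofReal_natCast]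
    exact volume_box_le_card A
  calc volume.real (box d (A : Set (Site d)) ∆ Metric.closedBall 0 R)
      ≤ 2 * volume.real (Metric.closedBall 0 R \ box d (A : Set (Site d))) :=
        measureReal_symmDiff_le_two_mul (μ := volume) (measurableSet_box _)
          Metric.isClosed_closedBall.measurableSet measure_closedBall_lt_top.ne hvolume
    _ ≤ 2 * (δ / 4 * A.card + A.card * (δ / 4)) := by
        refine mul_le_mul_of_nonneg_left ?_ zero_le_two
        refine (volume_real_closedBall_diff_box_le_of_sqrt_le A hR hε_lt.le hRd).trans ?_
        rw [hcard]
        gcongr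
        exact hannulus A hA hcard
    _ = δ * A.card := by ring

end Asymptotics

theorem rotor_router_shape_theorem_general {d : ℕ} {D : ℝ} {r : Site d → ℕ → Dir d}
    (hr : HasDiscrepancy d D r) :
    Tendsto (fun n : ℕ =>
        (volume (((n : ℝ) ^ (-(1 : ℝ) / (d : ℝ)) • box d (aggRegion r n)) ∆ unitVolBall d)).toReal)
      atTop (nhds 0) := by
  have : NeZero d := ⟨(r 0 0).1.pos.ne'⟩
  have hω := ballVol_pos d
  have hradius : Tendsto (fun n : ℕ => (n / ballVol d : ℝ) ^ (1 / d : ℝ)) atTop atTop :=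
    (tendsto_rpow_atTop (by have := NeZero.pos d; positivity)).comp
      (tendsto_natCast_atTop_atTop.atTop_div_const hω)
  refine tendsto_order.2 ⟨fun δ hδ => .of_forall fun n => hδ.trans_le ENNReal.toReal_nonneg,
    fun δ hδ => ?_⟩
  filter_upwards [hradius.eventually
      (eventually_volume_real_box_symmDiff_closedBall_le (d := d) hr.nonneg (half_pos hδ)),
    eventually_ne_atTop 0] with n hvolume hn
  obtain ⟨A, hA, hcard, hquad⟩ := exists_isApproxQuadratureDomain_aggRegion hr hn
  rw [← measureReal_def, volume_real_smul_symmDiff_unitVolBall (NeZero.ne d) hn, ← hA,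
    div_lt_iff₀ (by positivity)]
  have hball : ballVol d * ((n / ballVol d : ℝ) ^ (1 / d : ℝ)) ^ d = A.card := by
    rw [one_div, Real.rpow_inv_natCast_pow (by positivity) (NeZero.ne d), hcard,
      mul_div_cancel₀ _ hω.ne']
  refine (hvolume A hquad hball).trans_lt ?_
  rw [hcard]
  gcongr
  exact half_lt_self hδ

theorem rotor_router_shape_theorem (d : ℕ) (hd : 1 ≤ d)
    (r : Site d → ℕ → Dir d) (hr : HasDiscrepancy d 1 r) :
    Tendsto (fun n : ℕ =>
        (volume (((n : ℝ) ^ (-(1 : ℝ) / (d : ℝ)) • box d (aggRegion r n)) ∆ unitVolBall d)).toReal)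
      atTop (nhds 0) :=
  rotor_router_shape_theorem_general hr

end RotorRouterPaper
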